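/- arXiv:1703.00124 — 11 statements merged into one kernel-verified Lean document; each statement's English description precedes it below -/
import Mathlib

section
/- Let a finite group G act faithfully on a finite nonempty set Ω and let c be a positive integer. If the sum, over all elements x ∈ G of prime order, of |Fix_Ω(x)|^c is strictly less than |Ω|^c, then there exists a c-tuple (ω₁, …, ω_c) ∈ Ω^c whose pointwise stabilizer in G is trivial (i.e., G admits a base of size c, so the base size b(G) is at most c). -/
open scoped Classical

/-!
A tuple `f : Fin c → Ω` fails to be a base exactly when some `g ≠ 1` fixes all its entries; a
suitable power of `g` then has prime order and still fixes them
(`exists_prime_order_of_not_base`). So if no tuple is a base, the sets of tuples fixed by `x`, for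
`x` of prime order, cover `Ω ^ c`. Such a set has `|Fix(x)| ^ c` elements
(`card_fixed_tuples`), and the union bound contradicts the hypothesis.
-/

/-- The witness is the power `g ^ (orderOf g / p)` for a prime divisor `p` of `orderOf g`. -/
lemma exists_prime_order_of_not_base {G Ω ι : Type*} [Group G] [Finite G] [MulAction G Ω]
    (f : ι → Ω) {g : G} (hg : g ≠ 1) (hf : ∀ i, g • f i = f i) :
    ∃ x : G, (orderOf x).Prime ∧ ∀ i, x • f i = f i := by
  obtain ⟨p, hp, hdvd⟩ := Nat.exists_prime_and_dvd (mt orderOf_eq_one_iff.mp hg)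
  refine ⟨g ^ (orderOf g / p), ?_, fun i => ?_⟩
  · rwa [orderOf_pow_orderOf_div (orderOf_pos g).ne' hdvd]
  · exact (MulAction.stabilizer G (f i)).pow_mem (hf i) _

lemma card_fixed_tuples {G Ω : Type*} [Group G] [Fintype Ω] [MulAction G Ω] (c : ℕ) (x : G) :
    (Fintype.piFinset fun _ : Fin c => (MulAction.fixedBy Ω x).toFinset).card =
      (MulAction.fixedBy Ω x).ncard ^ c := by
  rw [Fintype.card_piFinset_const, Set.ncard_eq_toFinset_card']

/-- If a finite group `G` acts faithfully on a finite nonempty set `Ω`, `c > 0`,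
and the sum over the elements `x ∈ G` of prime order of `|Fix_Ω(x)|^c` is smaller than `|Ω|^c`,
then `G` admits a base of size `c`: a `c`-tuple of points with trivial pointwise stabilizer. -/
theorem base_of_fixed_point_sum {G Ω : Type*} [Group G] [Fintype G] [Fintype Ω] [Nonempty Ω]
    [MulAction G Ω] [FaithfulSMul G Ω] (c : ℕ) (hc : 0 < c)
    (h : ∑ x ∈ Finset.univ.filter (fun x : G => (orderOf x).Prime),
          (MulAction.fixedBy Ω x).ncard ^ c < Fintype.card Ω ^ c) :
    ∃ f : Fin c → Ω, ∀ g : G, (∀ i, g • f i = f i) → g = 1 := by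
  by_contra! hno
  refine h.not_ge ?_
  have hcover : (Finset.univ : Finset (Fin c → Ω)) ⊆
      (Finset.univ.filter fun x : G => (orderOf x).Prime).biUnion fun x =>
        Fintype.piFinset fun _ : Fin c => (MulAction.fixedBy Ω x).toFinset := by
    intro f _
    obtain ⟨g, hfix, hg⟩ := hno f
    obtain ⟨x, hx, hxf⟩ := exists_prime_order_of_not_base f hg hfix
    simp only [Finset.mem_biUnion, Finset.mem_filter, Finset.mem_univ, true_and,
      Fintype.mem_piFinset, Set.mem_toFinset, MulAction.mem_fixedBy]
    exact ⟨x, hx, hxf⟩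
  calc Fintype.card Ω ^ c = (Finset.univ : Finset (Fin c → Ω)).card := by simp
    _ ≤ _ := Finset.card_le_card hcover
    _ ≤ _ := Finset.card_biUnion_le
    _ = _ := Finset.sum_congr rfl fun x _ => card_fixed_tuples c x
end

section
/- Let q be a prime power, F a finite field with q elements and K a field extension of F of degree n. Suppose an element y = (λ, σ) of the semidirect product Kˣ ⋊ Gal(K/F) has prime order r and r divides n. Then λ is a (q^{n/r} − 1)-th power in Kˣ, i.e., there exists μ ∈ Kˣ with λ = μ^{q^{n/r} − 1}. -/
/-!
Put `m = n / r`, `x = q ^ m` and `S = 1 + x + ⋯ + x ^ (r - 1)`. The group `Kˣ` is cyclic of order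
`q ^ n - 1 = (x - 1) * S`, so `λ` is an `(x - 1)`-th power if and only if `λ ^ S = 1`.

The left component of `(λ, σ) ^ r = 1` says `∏ i < r, σ ^ i λ = 1`. If `σ ≠ 1`, then `σ` has order
`r`, so it generates the same subgroup of the cyclic Galois group as `τ`, the `m`-th power of
Frobenius; hence `∏ i < r, σ ^ i λ = ∏ i < r, τ ^ i λ = λ ^ S`. If `σ = 1`, then `λ` has order `r`,
so `r ∣ q ^ n - 1 = x ^ r - 1`. By Fermat `x ≡ x ^ r ≡ 1` modulo `r`, thus `S ≡ r ≡ 0` modulo `r`,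
and again `λ ^ S = 1`.
-/

/-- The natural action of the Galois group `Gal(K/F)` on the unit group `Kˣ`. -/
def galUnitsHom (F K : Type*) [Field F] [Field K] [Algebra F K] :
    (K ≃ₐ[F] K) →* MulAut Kˣ where
  toFun σ := Units.mapEquiv σ.toRingEquiv.toMulEquiv
  map_one' := by ext u; rfl
  map_mul' σ τ := by ext u; rfl

lemma exists_eq_pow_of_card_eq_mul {G : Type*} [Group G] [Finite G] [IsCyclic G] {d s : ℕ}
    (hc : Nat.card G = d * s) {a : G} (ha : a ^ s = 1) : ∃ b : G, a = b ^ d := by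
  obtain ⟨g, hg⟩ := IsCyclic.exists_generator (α := G)
  obtain ⟨k, rfl⟩ := Subgroup.mem_zpowers_iff.1 (hg a)
  have hs : s ≠ 0 := by
    rintro rfl
    exact Nat.card_pos.ne' hc
  have hdvd : ((d * s : ℕ) : ℤ) ∣ k * s := by
    rw [← hc, ← orderOf_eq_card_of_forall_mem_zpowers hg, orderOf_dvd_iff_zpow_eq_one, zpow_mul,
      zpow_natCast, ha]
  rw [Nat.cast_mul] at hdvd
  obtain ⟨j, rfl⟩ := Int.dvd_of_mul_dvd_mul_right (by exact_mod_cast hs) hdvd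
  exact ⟨g ^ j, by rw [mul_comm, zpow_mul, zpow_natCast]⟩

lemma semidirect_pow_left {N G : Type*} [CommGroup N] [Group G] {φ : G →* MulAut N}
    (y : N ⋊[φ] G) (r : ℕ) :
    (y ^ r).right = y.right ^ r ∧
      (y ^ r).left = ∏ i ∈ Finset.range r, φ (y.right ^ i) y.left := by
  induction r with
  | zero => simp
  | succ k ih =>
    rw [pow_succ, SemidirectProduct.mul_right, SemidirectProduct.mul_left, ih.1, ih.2,
      Finset.prod_range_succ, pow_succ]
    exact ⟨rfl, rfl⟩

/-- The product of `f` over the powers of a generator depends only on the cyclic subgroup. -/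
lemma prod_range_pow_eq_of_zpowers_eq {G M : Type*} [Group G] [Finite G] [CommMonoid M]
    (f : G → M) {σ τ : G} (h : Subgroup.zpowers σ = Subgroup.zpowers τ) :
    ∏ i ∈ Finset.range (orderOf σ), f (σ ^ i) = ∏ i ∈ Finset.range (orderOf τ), f (τ ^ i) := by
  classical
  have := Fintype.ofFinite G
  have key (ρ : G) : ∏ i ∈ Finset.range (orderOf ρ), f (ρ ^ i) =
      ∏ g ∈ (Subgroup.zpowers ρ : Set G).toFinset, f g := by
    rw [← image_range_orderOf, Finset.prod_image]
    intro i hi j hj hij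
    exact pow_injOn_Iio_orderOf (by simpa using hi) (by simpa using hj) hij
  rw [key, key]
  simp only [h]

lemma dvd_geom_sum_of_dvd_pow_sub_one {x r : ℕ} (hr : r.Prime) (hx : 0 < x)
    (h : r ∣ x ^ r - 1) : r ∣ ∑ i ∈ Finset.range r, x ^ i := by
  have := Fact.mk hr
  have h1 : (x : ZMod r) = 1 := by
    rw [← ZMod.natCast_eq_zero_iff, Nat.cast_sub (Nat.one_le_pow _ _ hx)] at h
    simpa [ZMod.pow_card, sub_eq_zero] using h
  rw [← ZMod.natCast_eq_zero_iff]
  simp [h1]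

/-- Let `F` be a finite field with `q` elements and `K` an extension of degree
`n`.  If `y = (λ, σ)` in the semidirect product `Kˣ ⋊ Gal(K/F)` has prime order `r` and `r ∣ n`,
then `λ` is a `(q^{n/r} - 1)`-th power in `Kˣ`. -/
theorem singer_normalizer_prime_order_form (q n : ℕ) (hq : IsPrimePow q)
    (F K : Type*) [Field F] [Fintype F] (hF : Fintype.card F = q)
    [Field K] [Algebra F K] [FiniteDimensional F K] (hn : Module.finrank F K = n)
    (y : Kˣ ⋊[galUnitsHom F K] (K ≃ₐ[F] K)) (r : ℕ) (hr : r.Prime)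
    (hy : orderOf y = r) (hrn : r ∣ n) :
    ∃ μ : Kˣ, y.left = μ ^ (q ^ (n / r) - 1) := by
  have : Finite K := Module.finite_of_finite F
  have hn0 : 0 < n := hn ▸ Module.finrank_pos
  obtain ⟨m, rfl⟩ := hrn
  have hm : m ≠ 0 := by rintro rfl; simp at hn0
  rw [Nat.mul_div_cancel_left _ hr.pos]
  have hx : 0 < q ^ m := pow_pos hq.pos _
  have hxr : q ^ (r * m) = (q ^ m) ^ r := by rw [← pow_mul, mul_comm]
  have hcard : Nat.card Kˣ = (q ^ m) ^ r - 1 := by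
    rw [Nat.card_units, Module.natCard_eq_pow_finrank (K := F), hn, Nat.card_eq_fintype_card, hF,
      hxr]
  have hgeom : (q ^ m) ^ r - 1 = (q ^ m - 1) * ∑ i ∈ Finset.range r, (q ^ m) ^ i := by
    have := geom_sum_mul_add (q ^ m - 1) r
    rw [Nat.sub_add_cancel (Nat.one_le_iff_ne_zero.2 hx.ne')] at this
    rw [← this, Nat.add_sub_cancel, mul_comm]
  refine exists_eq_pow_of_card_eq_mul (hcard.trans hgeom) ?_
  obtain ⟨hR, hL⟩ := semidirect_pow_left y r
  rw [← hy, pow_orderOf_eq_one, hy] at hR hL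
  rw [SemidirectProduct.one_right] at hR
  rw [SemidirectProduct.one_left] at hL
  by_cases hσ : y.right = 1
  · have h1 : y.left ^ r = 1 := by simpa [hσ] using hL.symm
    have hne : y.left ≠ 1 := by
      intro h
      have : y = 1 := SemidirectProduct.ext h hσ
      rw [this, orderOf_one] at hy
      exact hr.one_lt.ne hy
    have := Fact.mk hr
    have ho : orderOf y.left = r := orderOf_eq_prime h1 hne
    have hdvd : r ∣ (q ^ m) ^ r - 1 := by
      rw [← hcard, ← ho]
      exact orderOf_dvd_natCard _
    rw [← orderOf_dvd_iff_pow_eq_one, ho]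
    exact dvd_geom_sum_of_dvd_pow_sub_one hr hx hdvd
  · have := Fact.mk hr
    have hoσ : orderOf y.right = r := orderOf_eq_prime hR.symm hσ
    set φ := FiniteField.frobeniusAlgEquivOfAlgebraic F K with hφ
    have hoφ : orderOf φ = r * m :=
      (FiniteField.orderOf_frobeniusAlgEquivOfAlgebraic F K).trans hn
    have hoτ : orderOf (φ ^ m) = r := by
      rw [orderOf_pow_of_dvd hm (hoφ ▸ dvd_mul_left m r), hoφ,
        Nat.mul_div_cancel _ (Nat.pos_of_ne_zero hm)]
    obtain ⟨⟨k, hk⟩, hkσ⟩ := (FiniteField.bijective_frobeniusAlgEquivOfAlgebraic_pow F K).2 y.right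
    replace hkσ : φ ^ k = y.right := hkσ
    have hmk : m ∣ k := by
      have h : φ ^ (k * r) = 1 := by rw [pow_mul, hkσ, hR]
      rw [← orderOf_dvd_iff_pow_eq_one, hoφ, mul_comm k] at h
      exact Nat.dvd_of_mul_dvd_mul_left hr.pos h
    have hz : Subgroup.zpowers y.right = Subgroup.zpowers (φ ^ m) := by
      refine Subgroup.eq_of_le_of_card_ge ?_ ?_
      · obtain ⟨j, rfl⟩ := hmk
        rw [Subgroup.zpowers_le, ← hkσ, pow_mul]
        exact Subgroup.npow_mem_zpowers _ _
      · rw [Nat.card_zpowers, Nat.card_zpowers, hoσ, hoτ]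
    have hprod := prod_range_pow_eq_of_zpowers_eq (fun g => galUnitsHom F K g y.left) hz
    rw [hoσ, hoτ, ← hL] at hprod
    rw [hprod, ← Finset.prod_pow_eq_pow_sum]
    refine Finset.prod_congr rfl fun i _ => Units.ext ?_
    change ((y.left : Kˣ) : K) ^ (q ^ m) ^ i = ((φ ^ m) ^ i) (y.left : K)
    rw [← pow_mul, ← pow_mul, AlgEquiv.coe_pow, hφ,
      FiniteField.coe_frobeniusAlgEquivOfAlgebraic_iterate, hF]
end

section
/- Let q be a prime power, F a finite field with q elements and K a field extension of F of degree n. For λ ∈ Kˣ and σ ∈ Gal(K/F), let T : K → K be the F-linear automorphism T(v) = σ(λv). If T has prime order r (T ≠ id and T^r = id), then the F-subspace of fixed points {v ∈ K : T(v) = v} either is the zero subspace or satisfies: r divides n and the subspace has F-dimension exactly n/r. -/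
/-!
If `T` fixes some `v₀ ≠ 0`, then multiplication by `v₀` conjugates `σ` into `T`: since
`σ (a v₀) = v₀`, one has `T (w v₀) = σ w · v₀` for all `w`. Hence `σ` has the same order `r`
as `T`, and the fixed space of `T` is `v₀ · K^⟨σ⟩`. By Artin's theorem `[K : K^⟨σ⟩] = r`, so the
tower law gives `n = r · [K^⟨σ⟩ : F]`.
-/

/-- Let `F` be a finite field with `q` elements and `K` an extension of degree
`n`.  For `a ∈ Kˣ` and `σ ∈ Gal(K/F)` let `T : K → K` be the `F`-linear map `v ↦ σ(a·v)`.
If `T` has prime order `r`, then the subspace of fixed points of `T` is either zero, or `r ∣ n`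
and the fixed subspace has dimension `n / r`. -/
theorem fixed_space_of_singer_normalizer_element (q n : ℕ) (hq : IsPrimePow q)
    (F K : Type*) [Field F] [Fintype F] (hF : Fintype.card F = q)
    [Field K] [Algebra F K] [FiniteDimensional F K] (hn : Module.finrank F K = n)
    (a : Kˣ) (σ : K ≃ₐ[F] K) (T : Module.End F K) (hT : ∀ v : K, T v = σ ((a : K) * v))
    (r : ℕ) (hr : r.Prime) (hord : orderOf T = r) :
    LinearMap.ker (T - 1) = ⊥ ∨
      (r ∣ n ∧ Module.finrank F (LinearMap.ker (T - 1)) = n / r) := by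
  rw [or_iff_not_imp_left]
  intro hne
  obtain ⟨v₀, hv, hv0⟩ := Submodule.exists_mem_ne_zero_of_ne_bot hne
  have hfix : σ ((a : K) * v₀) = v₀ := by
    rw [LinearMap.mem_ker, LinearMap.sub_apply, hT, Module.End.one_apply, sub_eq_zero] at hv
    exact hv
  have hTσ : ∀ w : K, T (w * v₀) = σ w * v₀ := fun w => by
    rw [hT, mul_left_comm, map_mul, hfix]
  have hpow : ∀ (k : ℕ) (w : K), (T ^ k) (w * v₀) = (σ ^ k) w * v₀ := by
    intro k
    induction k with
    | zero => simp
    | succ k ih =>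
      intro w
      rw [pow_succ, pow_succ, Module.End.mul_apply, hTσ, ih, AlgEquiv.mul_apply]
  have hσ : orderOf σ = r := by
    rw [← hord, orderOf_eq_orderOf_iff]
    intro k
    constructor
    · intro h
      ext v
      have := hpow k (v / v₀)
      rw [h, div_mul_cancel₀ _ hv0, AlgEquiv.one_apply, div_mul_cancel₀ _ hv0] at this
      exact this
    · intro h
      ext w
      have := hpow k w
      rw [h, Module.End.one_apply] at this
      exact (mul_right_cancel₀ hv0 this).symm
  let L : IntermediateField F K := IntermediateField.fixedField (Subgroup.zpowers σ)
  have hL : ∀ w : K, w ∈ L ↔ σ w = w := by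
    intro w
    rw [IntermediateField.mem_fixedField_iff]
    constructor
    · exact fun h => h σ (Subgroup.mem_zpowers σ)
    · intro h τ hτ
      have hle : Subgroup.zpowers σ ≤ MulAction.stabilizer (K ≃ₐ[F] K) w :=
        Subgroup.zpowers_le.mpr h
      exact hle hτ
  have hLK : Module.finrank L K = r := by
    rw [IntermediateField.finrank_fixedField_eq_card, Nat.card_zpowers, hσ]
  have htower : Module.finrank F L * r = n := by
    rw [← hLK, Module.finrank_mul_finrank, hn]
  -- Multiplication by `v₀` identifies `K^⟨σ⟩` with the fixed space of `T`.
  let e : K ≃ₗ[F] K := LinearEquiv.ofBijective (LinearMap.mulRight F v₀)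
    ⟨mul_left_injective₀ hv0, fun v => ⟨v / v₀, div_mul_cancel₀ _ hv0⟩⟩
  have he : ∀ w, e w = w * v₀ := fun _ => rfl
  have hker : LinearMap.ker (T - 1) =
      L.toSubalgebra.toSubmodule.map (e : K →ₗ[F] K) := by
    ext v
    obtain ⟨w, rfl⟩ := e.surjective v
    rw [← LinearEquiv.coe_coe, Submodule.mem_map_equiv, LinearEquiv.coe_coe,
      LinearEquiv.symm_apply_apply, LinearMap.mem_ker, LinearMap.sub_apply,
      Module.End.one_apply, sub_eq_zero, he, hTσ, mul_left_inj' hv0]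
    exact (hL w).symm
  have hdim : Module.finrank F (LinearMap.ker (T - 1)) = Module.finrank F L := by
    rw [hker, LinearEquiv.finrank_map_eq]
    rfl
  refine ⟨Dvd.intro_left _ htower, ?_⟩
  rw [hdim, ← htower, Nat.mul_div_cancel _ hr.pos]
end

section
/- Let q be a prime power, F a finite field with q elements and K a field extension of F of degree n. Let G be the group of F-linear automorphisms of K, and let H ≤ G be the subgroup of all maps v ↦ σ(λv) with λ ∈ Kˣ and σ ∈ Gal(K/F). Let y ∈ G be multiplication by some λ₀ ∈ Kˣ, and suppose y has prime order r where r does not divide n. Then the set y^G ∩ H = {h ∈ H : h = g⁻¹ ∘ y ∘ g for some g ∈ G} has at most n elements. -/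
/-!
If `h : v ↦ σ(a v)` is conjugate to `y`, then `h ^ r = 1`. Since `h ^ r` is `σ ^ r` followed by a
multiplication, evaluating at `1` gives `σ ^ r = 1`; as `σ` lies in a group of order `n` prime to
`r`, `σ = 1` and `h` is multiplication by `a`. Conjugate maps satisfy the same polynomials over `F`,
so `a = h 1` is a root of the minimal polynomial of `a₀`, which has degree at most `n`. As `h` is
determined by `h 1`, there are at most `n` such `h`.
-/

/-- The powers of a `σ`-semilinear map `v ↦ σ(a v)` are `σ ^ k` followed by a multiplication. -/
lemma exists_pow_apply_eq_mul {F K : Type*} [Field F] [Field K] [Algebra F K]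
    (h : Module.End F K) (a : K) (σ : K ≃ₐ[F] K) (hh : ∀ v, h v = σ (a * v)) (k : ℕ) :
    ∃ c : K, ∀ v, (h ^ k) v = c * (σ ^ k) v := by
  induction k with
  | zero => exact ⟨1, fun v => by simp⟩
  | succ k ih =>
    obtain ⟨c, hc⟩ := ih
    refine ⟨σ a * σ c, fun v => ?_⟩
    rw [pow_succ', Module.End.mul_apply, hc, hh, pow_succ', AlgEquiv.mul_apply, map_mul, map_mul,
      mul_assoc]

lemma eq_one_of_pow_eq_one {F K : Type*} [Field F] [Finite F] [Field K] [Algebra F K]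
    [FiniteDimensional F K] (h : Module.End F K) (a : K) (σ : K ≃ₐ[F] K)
    (hh : ∀ v, h v = σ (a * v)) (r : ℕ) (hr : r.Coprime (Module.finrank F K))
    (hpow : h ^ r = 1) : σ = 1 := by
  have : Finite K := Module.finite_of_finite F
  obtain ⟨c, hc⟩ := exists_pow_apply_eq_mul h a σ hh r
  have hc1 : c = 1 := by simpa [hpow] using (hc 1).symm
  have hσr : σ ^ r = 1 := by
    ext v
    simpa [hpow, hc1] using (hc v).symm
  have hσn : σ ^ Module.finrank F K = 1 := by
    rw [← IsGalois.card_aut_eq_finrank F K]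
    exact pow_card_eq_one'
  exact orderOf_eq_one_iff.mp
    (Nat.eq_one_of_dvd_coprimes hr (orderOf_dvd_of_pow_eq_one hσr) (orderOf_dvd_of_pow_eq_one hσn))

open Polynomial in
/-- Conjugate multiplication maps have the same annihilating polynomials, hence the multipliers
do too. -/
lemma aeval_eq_zero_of_conj {F K : Type*} [Field F] [Field K] [Algebra F K]
    (y h g : (Module.End F K)ˣ) (a₀ a : K)
    (hy : ∀ v : K, (y : Module.End F K) v = a₀ * v)
    (hh : ∀ v : K, (h : Module.End F K) v = a * v)
    (hg : h = g⁻¹ * y * g) (p : F[X]) (hp : aeval a₀ p = 0) : aeval a p = 0 := by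
  have hy' : (y : Module.End F K) = Algebra.lmul F K a₀ := by ext v; simp [hy]
  have hh' : (h : Module.End F K) = Algebra.lmul F K a := by ext v; simp [hh]
  have hsemi : SemiconjBy (g : Module.End F K) (h : Module.End F K) (y : Module.End F K) := by
    have : g * h = y * g := by rw [hg]; group
    exact congrArg Units.val this
  have key : (g : Module.End F K) * aeval (h : Module.End F K) p
      = aeval (y : Module.End F K) p * (g : Module.End F K) := by
    simp only [aeval_eq_sum_range, Finset.mul_sum, Finset.sum_mul, mul_smul_comm, smul_mul_assoc,
      (hsemi.pow_right _).eq]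
  rw [hy', aeval_algHom_apply, hp, map_zero, zero_mul, hh', aeval_algHom_apply,
    Units.mul_right_eq_zero] at key
  simpa using congrArg (fun f : Module.End F K => f 1) key


/-- Let `F` be a finite field with `q` elements, `K` an extension of degree `n`,
`G = GL(K)` the group of `F`-linear automorphisms of `K`, and `H ≤ G` the set of maps
`v ↦ σ(a·v)` with `a ∈ Kˣ`, `σ ∈ Gal(K/F)` (the normalizer of a Singer cycle).  If `y ∈ G` is
multiplication by some `a₀ ∈ Kˣ` and has prime order `r` with `r ∤ n`, then
`|y^G ∩ H| ≤ n`. -/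
theorem conj_class_inter_singer_normalizer_le (q n : ℕ) (hq : IsPrimePow q)
    (F K : Type*) [Field F] [Fintype F] (hF : Fintype.card F = q)
    [Field K] [Algebra F K] [FiniteDimensional F K] (hn : Module.finrank F K = n)
    (y : (Module.End F K)ˣ) (a₀ : Kˣ) (hy : ∀ v : K, (y : Module.End F K) v = (a₀ : K) * v)
    (r : ℕ) (hr : r.Prime) (hord : orderOf y = r) (hrn : ¬ r ∣ n) :
    {h : (Module.End F K)ˣ |
        (∃ (a : Kˣ) (σ : K ≃ₐ[F] K), ∀ v : K, (h : Module.End F K) v = σ ((a : K) * v)) ∧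
        ∃ g : (Module.End F K)ˣ, h = g⁻¹ * y * g}.ncard ≤ n := by
  have hmult : ∀ h : (Module.End F K)ˣ, ∀ (a : Kˣ) (σ : K ≃ₐ[F] K),
      (∀ v : K, (h : Module.End F K) v = σ ((a : K) * v)) →
      ∀ g : (Module.End F K)ˣ, h = g⁻¹ * y * g → ∀ v : K, (h : Module.End F K) v = a * v := by
    intro h a σ hh g hg v
    have hpow : h ^ r = 1 := by
      have := conj_pow (i := r) (a := g⁻¹) (b := y)
      rw [inv_inv, ← hord, pow_orderOf_eq_one] at this
      rw [hg, ← hord, this]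
      group
    have hσ := eq_one_of_pow_eq_one (h : Module.End F K) a σ hh r
      (hn ▸ (Nat.Prime.coprime_iff_not_dvd hr).mpr hrn) (by rw [← Units.val_pow_eq_pow_val, hpow, Units.val_one])
    simp [hh, hσ]
  have hint : IsIntegral F (a₀ : K) := IsIntegral.of_finite F _
  have hdeg : ((minpoly F (a₀ : K)).rootSet K).ncard ≤ n := by
    classical
    rw [Polynomial.rootSet, Set.ncard_coe_finset]
    refine (Multiset.toFinset_card_le _).trans ((Polynomial.card_roots' _).trans ?_)
    rw [Polynomial.natDegree_map, ← hn]
    exact minpoly.natDegree_le _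
  refine le_trans (Set.ncard_le_ncard_of_injOn (fun h => (h : Module.End F K) 1) ?_ ?_
    (Polynomial.rootSet_finite _ _)) hdeg
  · rintro h ⟨⟨a, σ, hh⟩, g, hg⟩
    have ha := hmult h a σ hh g hg
    rw [Polynomial.mem_rootSet]
    refine ⟨minpoly.ne_zero hint, ?_⟩
    rw [ha 1, mul_one]
    exact aeval_eq_zero_of_conj y h g a₀ a hy ha hg _ (minpoly.aeval _ _)
  · rintro h ⟨⟨a, σ, hh⟩, g, hg⟩ h' ⟨⟨a', σ', hh'⟩, g', hg'⟩ heq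
    have ha := hmult h a σ hh g hg
    have ha' := hmult h' a' σ' hh' g' hg'
    have haa : (a : K) = a' := by simpa [ha, ha'] using heq
    ext v
    rw [ha, ha', haa]
end

section
/- Let F be a finite field with q elements, V a finite-dimensional F-vector space of dimension n ≥ 1, and x an F-linear automorphism of V of prime order r with r coprime to q. If the only x-invariant subspaces of V are the zero subspace and V itself, then the multiplicative order of q modulo r is equal to n (i.e., n is the least positive integer m with q^m ≡ 1 (mod r)). -/
/-!
Regard `V` as a module over `F[X]` with `X` acting as `x`. The hypothesis says that this module is
simple, so the minimal polynomial `p` of `x` is irreducible (`prime_minpoly_of_irreducible`), and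
`V` is generated by any nonzero vector, so `p` has degree `n`
(`natDegree_minpoly_of_irreducible`). Since `x ^ r = 1`, `p` divides
`X ^ r - 1 = Φ_r * (X - 1)`; it does not divide `X - 1` because `x ≠ 1`, hence it divides the
cyclotomic polynomial `Φ_r`. Over a field with `q` elements, with `q` prime to `r`, every
irreducible factor of `Φ_r` has degree equal to the order of `q` modulo `r`.
-/

open Polynomial

/-- If `a * b` annihilates `V`, then the kernel of `a(f)`, being invariant, is either all of `V`,
so that `a(f) = 0`, or trivial, so that `b(f) = 0`. -/
lemma prime_minpoly_of_irreducible {F V : Type*} [Field F] [AddCommGroup V] [Module F V]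
    [FiniteDimensional F V] [Nontrivial V] (f : Module.End F V)
    (hirr : ∀ W : Submodule F V, W.map f ≤ W → W = ⊥ ∨ W = ⊤) : Prime (minpoly F f) := by
  have hint : IsIntegral F f := Algebra.IsIntegral.isIntegral f
  refine ⟨minpoly.ne_zero hint, minpoly.not_isUnit F f, fun a b hab => ?_⟩
  rw [minpoly.dvd_iff] at hab
  have hinv : (LinearMap.ker (aeval f a)).map f ≤ LinearMap.ker (aeval f a) := by
    rintro _ ⟨v, hv, rfl⟩
    have hv' : aeval f a v = 0 := hv
    have h : aeval f a * f = f * aeval f a := by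
      simpa using congrArg (aeval f) (mul_comm a X)
    have h2 := LinearMap.congr_fun h v
    simp only [Module.End.mul_apply, hv', map_zero] at h2
    exact h2
  rcases hirr _ hinv with h | h
  · right
    apply minpoly.dvd
    ext v
    rw [map_mul] at hab
    have hv : aeval f b v ∈ LinearMap.ker (aeval f a) := LinearMap.congr_fun hab v
    rw [h] at hv
    simpa using hv
  · left
    exact minpoly.dvd _ _ (LinearMap.ker_eq_top.mp h)

/-- For `v ≠ 0` the cyclic subspace `F[f] v` is all of `V`, and reduction modulo the minimal
polynomial shows that it is spanned by the `g(f) v` with `g` of smaller degree than the minimal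
polynomial. -/
lemma natDegree_minpoly_of_irreducible {F V : Type*} [Field F] [AddCommGroup V] [Module F V]
    [FiniteDimensional F V] [Nontrivial V] (f : Module.End F V)
    (hirr : ∀ W : Submodule F V, W.map f ≤ W → W = ⊥ ∨ W = ⊤) :
    (minpoly F f).natDegree = Module.finrank F V := by
  have hint : IsIntegral F f := Algebra.IsIntegral.isIntegral f
  apply le_antisymm
  · rw [← LinearMap.charpoly_natDegree f]
    exact natDegree_le_of_dvd (LinearMap.minpoly_dvd_charpoly f)
      (LinearMap.charpoly_monic f).ne_zero
  · obtain ⟨v, hv⟩ := exists_ne (0 : V)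
    let φ : F[X] →ₗ[F] V := (LinearMap.applyₗ v).comp (aeval f).toLinearMap
    have hφ : ∀ g, φ g = aeval f g v := fun g => rfl
    have hinv : (LinearMap.range φ).map f ≤ LinearMap.range φ := by
      rintro _ ⟨_, ⟨g, rfl⟩, rfl⟩
      exact ⟨X * g, by simp [hφ]⟩
    have htop : LinearMap.range φ = ⊤ := by
      refine (hirr _ hinv).resolve_left fun h => hv ?_
      have h1 : φ 1 ∈ LinearMap.range φ := ⟨1, rfl⟩
      rw [h] at h1
      simpa [hφ] using h1
    have hsurj : Function.Surjective
        (φ.domRestrict (degreeLT F (minpoly F f).natDegree)) := by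
      intro w
      obtain ⟨g, rfl⟩ := LinearMap.range_eq_top.mp htop w
      refine ⟨⟨g %ₘ minpoly F f, ?_⟩, ?_⟩
      · rw [mem_degreeLT, ← degree_eq_natDegree (minpoly.ne_zero hint)]
        exact degree_modByMonic_lt _ (minpoly.monic hint)
      · rw [LinearMap.domRestrict_apply, hφ, hφ,
          aeval_modByMonic_eq_self_of_root (minpoly.aeval F f)]
    have e := degreeLTEquiv F (minpoly F f).natDegree
    have : Module.Finite F (degreeLT F (minpoly F f).natDegree) := Module.Finite.equiv e.symm
    calc _ ≤ Module.finrank F (degreeLT F (minpoly F f).natDegree) :=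
          LinearMap.finrank_le_finrank_of_surjective hsurj
      _ = _ := by rw [e.finrank_eq, Module.finrank_fin_fun]


/-- Let `F` be a finite field with `q` elements, `V` an `n`-dimensional
`F`-vector space with `n ≥ 1`, and `x` a linear automorphism of `V` of prime order `r` with
`gcd(r, q) = 1`.  If the only `x`-invariant subspaces of `V` are `⊥` and `⊤`, then the
multiplicative order of `q` modulo `r` equals `n`. -/
theorem order_of_q_mod_r_of_irreducible (q n : ℕ) (hq : IsPrimePow q)
    (F V : Type*) [Field F] [Fintype F] (hF : Fintype.card F = q)
    [AddCommGroup V] [Module F V] [FiniteDimensional F V] (hn : Module.finrank F V = n)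
    (hn1 : 1 ≤ n) (x : V ≃ₗ[F] V) (r : ℕ) (hr : r.Prime) (hord : orderOf x = r)
    (hcop : Nat.Coprime r q)
    (hirr : ∀ W : Submodule F V, W.map (x : V →ₗ[F] V) ≤ W → W = ⊥ ∨ W = ⊤) :
    orderOf ((q : ZMod r)) = n := by
  have : Nontrivial V := Module.nontrivial_of_finrank_pos (R := F) (by omega)
  have : Fact r.Prime := ⟨hr⟩
  have hp := prime_minpoly_of_irreducible (x : V →ₗ[F] V) hirr
  have hdeg := natDegree_minpoly_of_irreducible (x : V →ₗ[F] V) hirr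
  have hpow : (x : V →ₗ[F] V) ^ r = 1 := by
    have h : x ^ r = 1 := hord ▸ pow_orderOf_eq_one x
    have h2 := congrArg (fun y : V ≃ₗ[F] V => (y : V →ₗ[F] V)) h
    ext v
    simpa [Module.End.pow_apply, LinearEquiv.pow_apply] using LinearMap.congr_fun h2 v
  have hdvd : minpoly F (x : V →ₗ[F] V) ∣ cyclotomic r F * (X - 1) := by
    rw [cyclotomic_prime_mul_X_sub_one]
    apply minpoly.dvd
    simp [hpow]
  have hcyc : minpoly F (x : V →ₗ[F] V) ∣ cyclotomic r F := by
    refine (hp.dvd_or_dvd hdvd).resolve_right fun h => hr.ne_one ?_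
    rw [minpoly.dvd_iff, map_sub, aeval_X, map_one, sub_eq_zero] at h
    rw [← hord, orderOf_eq_one_iff]
    ext v
    exact LinearMap.congr_fun h v
  obtain ⟨p, k, hpp, hk, rfl⟩ := hq
  have : Fact p.Prime := ⟨hpp.nat_prime⟩
  have hpr : p.Coprime r := (Nat.Coprime.coprime_dvd_right (dvd_pow_self p hk.ne') hcop).symm
  have key := natDegree_of_dvd_cyclotomic_of_irreducible hF hpr hcyc hp.irreducible
  rw [← hn, ← hdeg, key, ← orderOf_units, ZMod.coe_unitOfCoprime]
end

section
/- Let q be a prime power, F a finite field with q elements and K a field extension of F of degree n with n ≥ 6. Let G be the group of F-linear automorphisms of K and let H ≤ G be the subgroup of all maps v ↦ σ(λv) with λ ∈ Kˣ and σ ∈ Gal(K/F) (the normalizer of a Singer cycle in GL_n(q)). Then there exists g ∈ G such that every element of H ∩ gHg⁻¹ is a scalar map, i.e., of the form v ↦ cv for some c ∈ Fˣ. (Equivalently, the base size b_H(G) is at most 2.) -/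
/-!
Take `g x = x + f x` with `f x = Tr (w x)`, where `w ∈ K` has trace zero and lies in no proper
intermediate field; `w` exists because the trace-zero hyperplane has at least `q ^ (n - 1)`
elements, while the proper intermediate fields together have fewer than `q ^ (n / 2 + 1)`. As
`f 1 = Tr w = 0`, the map `g` is invertible, with inverse `x ↦ x - f x`.

Suppose `h = σ (a ·)` and `h' = g⁻¹ h g = τ (b ·)`. Then `h x + f x * h 1 = h' x + f (h' x)`, so
`h` and `h'` agree on the common kernel of `f` and `f ∘ h'`, of dimension at least `n - 2`. If
`σ ≠ τ`, the solutions of `σ (a x) = τ (b x)` lie in a translate `x₀ E` of the fixed field `E`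
of `τ⁻¹ σ`, of dimension at most `n / 2 < n - 2`. Hence `σ = τ`, then `a = b`, so `h = h'` and
`f x * h 1 = f (h x)`. Therefore `h 1 = σ a` lies in `F`, so `a` does too, and then
`Tr (w * σ x) = Tr (w * x)` for all `x`. By nondegeneracy of the trace form `σ w = w`, so `σ = 1`
and `h` is the scalar `a`.
-/

section

variable {F K : Type*} [Field F] [Field K] [Algebra F K]

lemma two_mul_finrank_le_of_ne_top [FiniteDimensional F K] (E : IntermediateField F K) (hE : E ≠ ⊤) :
    2 * Module.finrank F E ≤ Module.finrank F K := by
  have h1 := Module.finrank_mul_finrank F E K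
  have h2 : Module.finrank E K ≠ 1 := fun h => hE (IntermediateField.finrank_eq_one_iff_eq_top.1 h)
  have h3 : 0 < Module.finrank E K := Module.finrank_pos
  rw [← h1, mul_comm]
  exact Nat.mul_le_mul_left _ (by omega)

/-- The fixed field of `σ`. -/
def fixedFieldOf (σ : K ≃ₐ[F] K) : IntermediateField F K :=
  IntermediateField.fixedField (Subgroup.zpowers σ)

lemma mem_fixedFieldOf (σ : K ≃ₐ[F] K) (x : K) (hx : σ x = x) : x ∈ fixedFieldOf σ := by
  rw [fixedFieldOf, IntermediateField.mem_fixedField_iff]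
  intro f hf
  have : Subgroup.zpowers σ ≤ MulAction.stabilizer (K ≃ₐ[F] K) x := by
    rw [Subgroup.zpowers_le]
    exact hx
  exact this hf

lemma fixedFieldOf_ne_top (σ : K ≃ₐ[F] K) (hσ : σ ≠ 1) : fixedFieldOf σ ≠ ⊤ := by
  intro h
  apply hσ
  ext x
  have hx : x ∈ fixedFieldOf σ := h ▸ IntermediateField.mem_top
  rw [fixedFieldOf, IntermediateField.mem_fixedField_iff] at hx
  exact hx σ (Subgroup.mem_zpowers σ)

/-- The maps `σ (a ·)` and `τ (b ·)` with `σ ≠ τ` agree on a subspace of at most half the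
dimension: the ratio of two solutions of `σ (a x) = τ (b x)` is fixed by `τ⁻¹ σ`. -/
lemma two_mul_finrank_le_of_agree [FiniteDimensional F K] (σ τ : K ≃ₐ[F] K) (hne : σ ≠ τ) (a b : Kˣ)
    (W : Submodule F K) (hW : ∀ x ∈ W, σ (a * x) = τ (b * x)) :
    2 * Module.finrank F W ≤ Module.finrank F K := by
  by_cases hbot : W = ⊥
  · rw [hbot, finrank_bot]
    omega
  obtain ⟨x₀, hx₀, hne₀⟩ := Submodule.exists_mem_ne_zero_of_ne_bot hbot
  have hρ : τ⁻¹ * σ ≠ 1 := fun h => hne (by rwa [inv_mul_eq_one, eq_comm] at h)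
  refine le_trans ?_ (two_mul_finrank_le_of_ne_top _ (fixedFieldOf_ne_top _ hρ))
  have key : ∀ x ∈ W, x₀⁻¹ * x ∈ fixedFieldOf (τ⁻¹ * σ) := by
    intro x hx
    apply mem_fixedFieldOf
    have h : σ (x₀⁻¹ * x) = τ (x₀⁻¹ * x) := by
      have e1 := hW x hx
      have e2 := hW x₀ hx₀
      have : x₀⁻¹ * x = (a * x) / (a * x₀) := by
        field_simp
      rw [this, map_div₀, e1, e2, ← map_div₀]
      congr 1
      field_simp
    rw [AlgEquiv.mul_apply, h]
    exact τ.symm_apply_apply _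
  let φ : W →ₗ[F] fixedFieldOf (τ⁻¹ * σ) :=
    LinearMap.codRestrict (fixedFieldOf (τ⁻¹ * σ)).toSubalgebra.toSubmodule
      ((LinearMap.mulLeft F x₀⁻¹).comp W.subtype) (fun x => key x x.2)
  have hφ : Function.Injective φ := by
    intro x y hxy
    have : x₀⁻¹ * (x : K) = x₀⁻¹ * y := congrArg (fun z => (z.1 : K)) hxy
    exact Subtype.ext (mul_left_cancel₀ (inv_ne_zero hne₀) this)
  exact Nat.mul_le_mul_left _ (LinearMap.finrank_le_finrank_of_injective hφ)

/-- The hyperplane of trace zero is not covered by the proper intermediate fields: an element of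
one of degree `d` satisfies `w ^ q ^ d = w` with `d ≤ n / 2`, and counting the roots of these
polynomials gives fewer than `q ^ (n - 1)` elements. -/
lemma exists_trace_zero_generator [FiniteDimensional F K] [Fintype F] (hn : 6 ≤ Module.finrank F K) :
    ∃ w : K, w ≠ 0 ∧ Algebra.trace F K w = 0 ∧ ∀ σ : K ≃ₐ[F] K, σ w = w → σ = 1 := by
  classical
  have : Finite K := Module.finite_of_finite F
  have : Fintype K := Fintype.ofFinite K
  set q := Fintype.card F with hq
  have hq2 : 2 ≤ q := Fintype.one_lt_card
  set n := Module.finrank F K with hnK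
  suffices ∃ w : K, Algebra.trace F K w = 0 ∧ ∀ d ∈ Finset.Icc 1 (n / 2), w ^ q ^ d ≠ w by
    obtain ⟨w, htr, hw⟩ := this
    refine ⟨w, ?_, htr, ?_⟩
    · rintro rfl
      exact hw 1 (by simp; omega) (zero_pow (by positivity))
    · intro σ hσ
      by_contra hne
      have hE := two_mul_finrank_le_of_ne_top _ (fixedFieldOf_ne_top σ hne)
      have hmem := mem_fixedFieldOf σ w hσ
      refine hw (Module.finrank F (fixedFieldOf σ)) ?_ ?_
      · have : 0 < Module.finrank F (fixedFieldOf σ) := Module.finrank_pos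
        rw [Finset.mem_Icc]
        omega
      · have : Fintype (fixedFieldOf σ) := Fintype.ofFinite _
        have h1 := FiniteField.pow_card (⟨w, hmem⟩ : fixedFieldOf σ)
        rw [Module.card_eq_pow_finrank (K := F)] at h1
        exact congrArg Subtype.val h1
  by_contra! hcon
  let T : Finset K := Finset.univ.filter fun x => x ∈ LinearMap.ker (Algebra.trace F K)
  have hT : q ^ (n - 1) ≤ T.card := by
    have h1 : T.card = Nat.card (LinearMap.ker (Algebra.trace F K)) := by
      rw [Nat.card_eq_fintype_card, Fintype.card_subtype]
    have h2 : n - 1 ≤ Module.finrank F (LinearMap.ker (Algebra.trace F K)) := by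
      have h3 := LinearMap.finrank_range_add_finrank_ker (Algebra.trace F K)
      have h4 := Submodule.finrank_le (LinearMap.range (Algebra.trace F K))
      rw [Module.finrank_self] at h4
      omega
    rw [h1, Nat.card_eq_fintype_card, Module.card_eq_pow_finrank (K := F)]
    exact Nat.pow_le_pow_right (by omega) h2
  let R : ℕ → Finset K := fun d => (Polynomial.X ^ q ^ d - Polynomial.X : Polynomial K).roots.toFinset
  have hR : ∀ d ∈ Finset.Icc 1 (n / 2), (R d).card ≤ q ^ d := by
    intro d hd
    have h1 : 1 < q ^ d := Nat.one_lt_pow (by rw [Finset.mem_Icc] at hd; omega) hq2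
    calc (R d).card ≤ _ := Multiset.toFinset_card_le _
      _ ≤ _ := Polynomial.card_roots' _
      _ = q ^ d := FiniteField.X_pow_card_sub_X_natDegree_eq K h1
  have hsub : T ⊆ (Finset.Icc 1 (n / 2)).biUnion R := by
    intro x hx
    obtain ⟨d, hd, hxd⟩ := hcon x (by simpa [T] using hx)
    have h1 : 1 < q ^ d := Nat.one_lt_pow (by rw [Finset.mem_Icc] at hd; omega) hq2
    rw [Finset.mem_biUnion]
    refine ⟨d, hd, ?_⟩
    simp only [R, Multiset.mem_toFinset]
    rw [Polynomial.mem_roots (FiniteField.X_pow_card_sub_X_ne_zero K h1)]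
    simp [hxd]
  have h1 : T.card ≤ ∑ d ∈ Finset.Icc 1 (n / 2), q ^ d :=
    (Finset.card_le_card hsub).trans (Finset.card_biUnion_le.trans (Finset.sum_le_sum hR))
  have h2 : ∑ d ∈ Finset.Icc 1 (n / 2), q ^ d < q ^ (n / 2 + 1) :=
    Nat.geomSum_lt hq2 (by intro k hk; rw [Finset.mem_Icc] at hk; omega)
  have h3 : q ^ (n / 2 + 1) ≤ q ^ (n - 1) := Nat.pow_le_pow_right (by omega) (by omega)
  omega

end


/-- **Lemma, `n ≥ 6`.** Let `F` be a finite field with `q` elements, `K` an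
extension of degree `n ≥ 6`, `G = GL(K)` the group of `F`-linear automorphisms of `K` and
`H = {v ↦ σ(a·v) : a ∈ Kˣ, σ ∈ Gal(K/F)}` the normalizer of a Singer cycle.  Then there exists
`g ∈ G` such that every element of `H ∩ gHg⁻¹` is a scalar map `v ↦ c·v` with `c ∈ Fˣ`;
i.e. the base size `b_H(G)` is at most `2`. -/
theorem singer_normalizer_base_two (q n : ℕ) (hq : IsPrimePow q)
    (F K : Type*) [Field F] [Fintype F] (hF : Fintype.card F = q)
    [Field K] [Algebra F K] [FiniteDimensional F K] (hn : Module.finrank F K = n)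
    (hn6 : 6 ≤ n) :
    ∃ g : (Module.End F K)ˣ, ∀ h : (Module.End F K)ˣ,
      (∃ (a : Kˣ) (σ : K ≃ₐ[F] K), ∀ v : K, (h : Module.End F K) v = σ ((a : K) * v)) →
      (∃ (a : Kˣ) (σ : K ≃ₐ[F] K), ∀ v : K,
          ((g⁻¹ * h * g : (Module.End F K)ˣ) : Module.End F K) v = σ ((a : K) * v)) →
      ∃ c : Fˣ, ∀ v : K, (h : Module.End F K) v = (c : F) • v := by
  subst hn
  obtain ⟨w, hw0, htr, hw⟩ := exists_trace_zero_generator (F := F) (K := K) hn6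
  have : Finite K := Module.finite_of_finite F
  have nondeg : ∀ y : K, (∀ x, Algebra.trace F K (y * x) = 0) → y = 0 := fun y hy =>
    (traceForm_nondegenerate F K).1 y hy
  let f : K →ₗ[F] F := (Algebra.trace F K).comp (LinearMap.mulLeft F w)
  have hf : ∀ x, f x = Algebra.trace F K (w * x) := fun _ => rfl
  let N : Module.End F K := (Algebra.linearMap F K).comp f
  have hN : ∀ x, N x = algebraMap F K (f x) := fun _ => rfl
  have hf1 : ∀ c : F, f (algebraMap F K c) = 0 := by
    intro c
    rw [Algebra.algebraMap_eq_smul_one, map_smul, hf, mul_one, htr, smul_zero]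
  have hNN : N * N = 0 := by
    ext x
    rw [Module.End.mul_apply, hN, hN, hf1]
    simp
  let g : (Module.End F K)ˣ :=
    ⟨1 + N, 1 - N, by simp [add_mul, mul_sub, hNN], by simp [sub_mul, mul_add, hNN]⟩
  refine ⟨g, ?_⟩
  rintro h ⟨a, σ, hσ⟩ ⟨b, τ, hτ⟩
  set h' := g⁻¹ * h * g with hh'
  have hcomm : h * g = g * h' := by rw [hh']; group
  have E : ∀ x, σ (a * x) + f x • σ a = τ (b * x) + algebraMap F K (f (τ (b * x))) := by
    intro x
    have e := congrArg (fun u : (Module.End F K)ˣ => (u : Module.End F K) x) hcomm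
    have e1 : (h : Module.End F K) (x + N x) =
        (h' : Module.End F K) x + N ((h' : Module.End F K) x) := e
    rw [map_add, hN, Algebra.algebraMap_eq_smul_one, map_smul, hσ, hσ, hτ, mul_one, hN] at e1
    exact e1
  -- On the kernel of `φ`, of codimension at most `2`, the maps `h` and `h'` agree.
  let φ : K →ₗ[F] F × F := f.prod (f.comp (h' : Module.End F K))
  have hker : ∀ x ∈ LinearMap.ker φ, σ (a * x) = τ (b * x) := by
    intro x hx
    have hx' : (f x, f ((h' : Module.End F K) x)) = (0, 0) := hx
    rw [Prod.mk.injEq, hτ] at hx'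
    have e := E x
    rwa [hx'.1, hx'.2, zero_smul, add_zero, map_zero, add_zero] at e
  have hdim : Module.finrank F K ≤ Module.finrank F (LinearMap.ker φ) + 2 := by
    have h3 := LinearMap.finrank_range_add_finrank_ker φ
    have h4 := Submodule.finrank_le (LinearMap.range φ)
    rw [Module.finrank_prod, Module.finrank_self] at h4
    omega
  have hστ : σ = τ := by
    by_contra hne
    have := two_mul_finrank_le_of_agree σ τ hne a b _ hker
    omega
  subst hστ
  have hab : (a : K) = b := by
    have hbot : LinearMap.ker φ ≠ ⊥ := by
      intro hb
      rw [hb, finrank_bot] at hdim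
      omega
    obtain ⟨x, hx, hx0⟩ := Submodule.exists_mem_ne_zero_of_ne_bot hbot
    exact mul_right_cancel₀ hx0 (σ.injective (hker x hx))
  have E' : ∀ x, f x • σ a = algebraMap F K (f (σ (a * x))) := by
    intro x
    have := E x
    rw [← hab] at this
    exact add_left_cancel this
  obtain ⟨c, hc⟩ : ∃ c : F, (a : K) = algebraMap F K c := by
    obtain ⟨x, hx⟩ : ∃ x, f x ≠ 0 := by
      by_contra! hall
      exact hw0 (nondeg w hall)
    refine ⟨(f x)⁻¹ * f (σ (a * x)), σ.injective ?_⟩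
    rw [AlgEquiv.commutes, map_mul, ← E' x, Algebra.smul_def, ← mul_assoc, ← map_mul,
      inv_mul_cancel₀ hx, map_one, one_mul]
  have hc0 : c ≠ 0 := by
    rintro rfl
    exact a.ne_zero (by rw [hc, map_zero])
  have hfσ : ∀ x, f (σ x) = f x := by
    intro x
    have e := E' x
    rw [hc, AlgEquiv.commutes, ← Algebra.smul_def, map_smul, map_smul, Algebra.smul_def,
      ← map_mul] at e
    have e' := (algebraMap F K).injective e
    rw [smul_eq_mul, mul_comm] at e'
    exact (mul_left_cancel₀ hc0 e').symm
  have hσw : σ w = w := by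
    refine (sub_eq_zero.1 (nondeg (w - σ w) ?_)).symm
    intro y
    obtain ⟨x, rfl⟩ := σ.surjective y
    have e := hfσ x
    rw [hf, hf, ← Algebra.trace_eq_of_algEquiv σ (w * x), map_mul σ] at e
    rw [sub_mul, map_sub, e, sub_self]
  have hσ1 := hw σ hσw
  refine ⟨Units.mk0 c hc0, fun v => ?_⟩
  rw [hσ v, hσ1, hc, Units.val_mk0, Algebra.smul_def]
  rfl
end

section
/- Let q, e, k be positive integers with q ≥ 2 and let t be a nonnegative integer; set n = ek + t. Then, as rational numbers, q^{n(n−1)/2} · ∏_{i=1}^{n} (q^i − 1) ≥ q^{n(n−1) − ek² + k − t²} · q^{ek(k−1)/2 + t(t−1)/2} · ∏_{i=1}^{k} (q^{ei} − 1) · ∏_{i=1}^{t} (q^i − 1). (Equivalently: if x ∈ GL_n(q) has centralizer contained in GL_k(q^e) × GL_t(q), then |x^{GL_n(q)}| ≥ q^{n(n−1) − ek² + k − t²}.) -/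
/-!
Write `P x m = ∏_{i=1}^{m} (1 - x⁻ⁱ)`, so that `|GL_m(x)| = x^{m²} · P x m`. After dividing by
powers of `q`, the claim becomes
`P (q^e) k · P q t ≤ q^{(e-1)k + t} · P q (ek + t)`.
Split the indices `t < i ≤ ek + t` into `k` consecutive blocks of length `e`. The last factor of
the `j`-th block is `1 - q^{-(ej+t)} ≥ 1 - q^{-ej}`, the `j`-th factor of `P (q^e) k`. Each of the
other `(e-1)k` factors absorbs one power of `q`, because `q (1 - q⁻ⁱ) ≥ q - 1 ≥ 1`. The remaining
`q^t` is only slack.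
-/

/-- The normalized order `∏_{i=1}^{m} (1 - x⁻ⁱ)` of `GL_m(x)`, that is `|GL_m(x)| / x^{m²}`. -/
def glDensity (x : ℚ) (m : ℕ) : ℚ := ∏ i ∈ Finset.Icc 1 m, (1 - (x ^ i)⁻¹)

lemma glDensity_zero (x : ℚ) : glDensity x 0 = 1 := by simp [glDensity]

lemma glDensity_succ (x : ℚ) (m : ℕ) :
    glDensity x (m + 1) = glDensity x m * (1 - (x ^ (m + 1))⁻¹) := by
  unfold glDensity
  rw [Finset.prod_Icc_succ_top (by omega)]

lemma one_sub_inv_pow_nonneg {x : ℚ} (hx : 1 ≤ x) (i : ℕ) : 0 ≤ 1 - (x ^ i)⁻¹ :=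
  sub_nonneg.2 (inv_le_one_of_one_le₀ (one_le_pow₀ hx))

lemma glDensity_nonneg {x : ℚ} (hx : 1 ≤ x) (m : ℕ) : 0 ≤ glDensity x m :=
  Finset.prod_nonneg fun i _ => one_sub_inv_pow_nonneg hx i

lemma gl_order_eq {x : ℚ} (hx : x ≠ 0) (m : ℕ) :
    x ^ (m * (m - 1) / 2) * ∏ i ∈ Finset.Icc 1 m, (x ^ i - 1) = x ^ (m ^ 2) * glDensity x m := by
  induction m with
  | zero => simp [glDensity_zero]
  | succ m ih =>
    have h : x ^ (m + 1) - 1 = x ^ (m + 1) * (1 - (x ^ (m + 1))⁻¹) := by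
      field_simp
    rw [Nat.triangle_succ, Finset.prod_Icc_succ_top (by omega), glDensity_succ, pow_add, h]
    calc _ = (x ^ (m * (m - 1) / 2) * ∏ i ∈ Finset.Icc 1 m, (x ^ i - 1)) *
          (x ^ m * (x ^ (m + 1) * (1 - (x ^ (m + 1))⁻¹))) := by ring
      _ = _ := by rw [ih]; ring

/-- Each extra factor `1 - q⁻ⁱ` is compensated by one power of `q`. -/
lemma glDensity_le_pow_mul {q : ℚ} (hq : 2 ≤ q) (m j : ℕ) :
    glDensity q m ≤ q ^ j * glDensity q (m + j) := by
  induction j with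
  | zero => simp
  | succ j ih =>
    have h1 : 1 ≤ q * (1 - (q ^ (m + j + 1))⁻¹) := by
      have h2 : q * (q ^ (m + j + 1))⁻¹ = (q ^ (m + j))⁻¹ := by
        rw [pow_succ]; field_simp
      have h3 : (q ^ (m + j))⁻¹ ≤ 1 := inv_le_one_of_one_le₀ (one_le_pow₀ (by linarith))
      rw [mul_sub, h2]; linarith
    have h0 : 0 ≤ q ^ j * glDensity q (m + j) :=
      mul_nonneg (by positivity) (glDensity_nonneg (by linarith) _)
    calc glDensity q m ≤ q ^ j * glDensity q (m + j) := ih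
      _ ≤ (q ^ j * glDensity q (m + j)) * (q * (1 - (q ^ (m + j + 1))⁻¹)) :=
        le_mul_of_one_le_right h0 h1
      _ = _ := by rw [← add_assoc, glDensity_succ]; ring

/-- The block comparison, with `e = d + 1`. -/
lemma glDensity_mul_le {q : ℚ} (hq : 2 ≤ q) (d k t : ℕ) :
    glDensity (q ^ (d + 1)) k * glDensity q t ≤
      q ^ (d * k) * glDensity q ((d + 1) * k + t) := by
  have hq1 : 1 ≤ q := by linarith
  induction k with
  | zero => simp [glDensity_zero]
  | succ k ih =>
    set m := (d + 1) * k + t with hm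
    have hidx : (d + 1) * (k + 1) + t = m + d + 1 := by rw [hm]; ring
    have hlast : 1 - ((q ^ (d + 1)) ^ (k + 1))⁻¹ ≤ 1 - (q ^ (m + d + 1))⁻¹ := by
      rw [← pow_mul, ← hidx]
      gcongr
      omega
    have hnn := one_sub_inv_pow_nonneg (one_le_pow₀ hq1 : 1 ≤ q ^ (d + 1)) (k + 1)
    have hD := glDensity_nonneg hq1 (m + d)
    rw [hidx, glDensity_succ, glDensity_succ]
    calc _ = (glDensity (q ^ (d + 1)) k * glDensity q t) *
          (1 - ((q ^ (d + 1)) ^ (k + 1))⁻¹) := by ring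
      _ ≤ (q ^ (d * k) * (q ^ d * glDensity q (m + d))) * (1 - (q ^ (m + d + 1))⁻¹) := by
        refine mul_le_mul (ih.trans ?_) hlast hnn (by positivity)
        exact mul_le_mul_of_nonneg_left (glDensity_le_pow_mul hq m d) (by positivity)
      _ = _ := by ring

/-- For integers `q ≥ 2`, `e, k ≥ 1`, `t ≥ 0` and `n = ek + t`:
`|GL_n(q)| ≥ q^{n(n-1) - ek² + k - t²} · |GL_k(q^e)| · |GL_t(q)|` as rational numbers;
this is the estimate `|x^{GL_n(q)}| ≥ q^{n(n-1) - ek² + k - t²}` for an element whose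
centralizer is contained in `GL_k(q^e) × GL_t(q)`. -/
theorem gl_conj_class_size_estimate (q e k t n : ℕ) (hq : 2 ≤ q) (he : 1 ≤ e) (hk : 1 ≤ k)
    (hn : n = e * k + t) :
    (q : ℚ) ^ (n * (n - 1) / 2) * ∏ i ∈ Finset.Icc 1 n, ((q : ℚ) ^ i - 1) ≥
      (q : ℚ) ^ ((n : ℤ) * (n - 1) - e * k ^ 2 + k - t ^ 2) *
        ((q : ℚ) ^ (e * (k * (k - 1) / 2) + t * (t - 1) / 2) *
          (∏ i ∈ Finset.Icc 1 k, ((q : ℚ) ^ (e * i) - 1)) *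
          ∏ i ∈ Finset.Icc 1 t, ((q : ℚ) ^ i - 1)) := by
  obtain ⟨d, rfl⟩ : ∃ d, e = d + 1 := ⟨e - 1, by omega⟩
  have hQ : (2 : ℚ) ≤ q := by exact_mod_cast hq
  generalize (q : ℚ) = x at hQ ⊢
  have hx : x ≠ 0 := by positivity
  have hx1 : 1 ≤ x := by linarith
  have hcent : x ^ ((d + 1) * (k * (k - 1) / 2) + t * (t - 1) / 2) *
      (∏ i ∈ Finset.Icc 1 k, (x ^ ((d + 1) * i) - 1)) * ∏ i ∈ Finset.Icc 1 t, (x ^ i - 1) =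
      x ^ ((d + 1) * k ^ 2 + t ^ 2) * (glDensity (x ^ (d + 1)) k * glDensity x t) := by
    have h1 := gl_order_eq (pow_ne_zero (d + 1) hx) k
    have h2 := gl_order_eq hx t
    simp only [← pow_mul] at h1
    rw [pow_add, pow_add]
    linear_combination (x ^ (t * (t - 1) / 2) * ∏ i ∈ Finset.Icc 1 t, (x ^ i - 1)) * h1 +
      x ^ ((d + 1) * k ^ 2) * glDensity (x ^ (d + 1)) k * h2
  have hexp : x ^ ((n : ℤ) * (n - 1) - (d + 1 : ℕ) * k ^ 2 + k - t ^ 2) *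
      x ^ ((d + 1) * k ^ 2 + t ^ 2) = x ^ ((n : ℤ) ^ 2 - d * k - t) := by
    rw [← zpow_natCast, ← zpow_add₀ hx]
    congr 1
    subst hn
    push_cast
    ring
  rw [ge_iff_le, gl_order_eq hx, hcent, ← mul_assoc, hexp]
  calc x ^ ((n : ℤ) ^ 2 - d * k - t) * (glDensity (x ^ (d + 1)) k * glDensity x t)
      ≤ x ^ ((n : ℤ) ^ 2 - d * k - t) * (x ^ (d * k) * glDensity x n) := by
        rw [hn]
        exact mul_le_mul_of_nonneg_left (glDensity_mul_le hQ d k t) (by positivity)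
    _ = x ^ ((n : ℤ) ^ 2 - t) * glDensity x n := by
        rw [← mul_assoc, ← zpow_natCast x (d * k), ← zpow_add₀ hx]
        congr 2
        push_cast
        ring
    _ ≤ x ^ (n ^ 2) * glDensity x n := by
        refine mul_le_mul_of_nonneg_right ?_ (glDensity_nonneg hx1 n)
        rw [← zpow_natCast]
        refine zpow_le_zpow_right₀ hx1 ?_
        push_cast
        omega
end

section
/- Let q, e, k be integers with q ≥ 2, e ≥ 2, k ≥ 1, let t be a nonnegative integer, and set n = ek + t. Then ( q^{n(n−1)/2} · ∏_{i=1}^{n} (q^i − (−1)^i) )² ≥ q^{2(n(n−1) − ek² + k − t²) + (n − k − t − 1)} · ( q^{ek(k−1)/2 + t(t−1)/2} · ∏_{i=1}^{k} (q^{ei} − (−1)^i) · ∏_{i=1}^{t} (q^i − (−1)^i) )². (Equivalently: if x ∈ GU_n(q) has centralizer contained in GU_k(q^e) × GU_t(q), then log_q |x^{GU_n(q)}| ≥ n(n−1) − ek² + k − t² + (n − k − t − 1)/2.) -/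
/-!
Write `P y n = ∏_{i=1}^n (1 - (-y)^i)`. Pulling the leading powers of `q` out of every factor gives
`|GU_m(x)| = x^{m²} P(x⁻¹, m)`, so with `y = q⁻¹` the claim becomes
`q^{(e-1)k + 2t + 1} · P(y, n)² ≥ (P(y^e, k) · P(y, t))²`.
Consecutive factors of `P` nearly cancel: `(1 + y^i)(1 - y^{i+1}) ≥ 1` for `y ≤ 1/2` and
`(1 - y^i)(1 + y^{i+1}) ≤ 1`. Pairing factors therefore yields `P(y, n) ≥ (3/4) P(y, t)` for `n ≥ t`
and `P(y^e, k) ≤ 1 + y^e ≤ 5/4`. As the exponent of `q` is at least `2`, the claim follows from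
`2 · (3/4) ≥ 5/4`.
-/

/-- The normalized unitary product `∏_{i=1}^n (1 - (-y)^i)`. -/
def unitaryProd (y : ℚ) (n : ℕ) : ℚ := ∏ i ∈ Finset.Icc 1 n, (1 - (-y) ^ i)

lemma unitaryProd_succ (y : ℚ) (n : ℕ) :
    unitaryProd y (n + 1) = unitaryProd y n * (1 - (-y) ^ (n + 1)) := by
  unfold unitaryProd
  rw [Finset.prod_Icc_succ_top (by omega)]

lemma unitaryProd_pos {y : ℚ} (h0 : 0 < y) (h1 : y ≤ 1 / 2) (n : ℕ) : 0 < unitaryProd y n := by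
  refine Finset.prod_pos fun i hi => ?_
  have hi' : i ≠ 0 := by have := Finset.mem_Icc.1 hi; omega
  have h : |(-y) ^ i| < 1 := by
    rw [abs_pow, abs_neg, abs_of_pos h0]
    exact pow_lt_one₀ h0.le (by linarith) hi'
  linarith [(abs_lt.1 h).2]

lemma unitaryProd_le {y : ℚ} (h0 : 0 < y) (h1 : y ≤ 1 / 2) (k : ℕ) :
    unitaryProd y k ≤ 1 + y := by
  have hodd : ∀ m : ℕ, unitaryProd y (2 * m + 1) ≤ 1 + y := by
    intro m
    induction m with
    | zero => simp [unitaryProd]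
    | succ m ih =>
      refine le_trans ?_ ih
      rw [show 2 * (m + 1) + 1 = 2 * m + 1 + 1 + 1 by ring, unitaryProd_succ, unitaryProd_succ y (2 * m + 1),
        mul_assoc]
      refine mul_le_of_le_one_right (unitaryProd_pos h0 h1 _).le ?_
      rw [Even.neg_pow ⟨m + 1, by ring⟩, Odd.neg_pow ⟨m + 1, by ring⟩, pow_succ y (2 * m + 1 + 1)]
      have hz : 0 < y ^ (2 * m + 1 + 1) := by positivity
      nlinarith [mul_pos hz h0, mul_pos hz (mul_pos hz h0)]
  rcases Nat.even_or_odd' k with ⟨m, rfl | rfl⟩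
  · cases m with
    | zero => simp [unitaryProd, h0.le]
    | succ m =>
      refine le_trans ?_ (hodd m)
      rw [show 2 * (m + 1) = 2 * m + 1 + 1 by ring, unitaryProd_succ]
      refine mul_le_of_le_one_right (unitaryProd_pos h0 h1 _).le ?_
      rw [Even.neg_pow ⟨m + 1, by ring⟩]
      have hz : 0 < y ^ (2 * m + 1 + 1) := by positivity
      linarith
  · exact hodd m

lemma unitaryProd_le_add_of_even {y : ℚ} (h0 : 0 < y) (h1 : y ≤ 1 / 2) {t : ℕ} (ht : Even t)
    (s : ℕ) : unitaryProd y t ≤ unitaryProd y (t + s) := by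
  induction s using Nat.strong_induction_on generalizing t with
  | _ s ih =>
    match s with
    | 0 => simp
    | 1 =>
      rw [unitaryProd_succ, ht.add_one.neg_pow]
      refine le_mul_of_one_le_right (unitaryProd_pos h0 h1 _).le ?_
      have hz : 0 < y ^ (t + 1) := by positivity
      linarith
    | s + 2 =>
      have h := ih s (by omega) (t := t + 2) (ht.add even_two)
      rw [show t + (s + 2) = t + 2 + s by ring]
      refine le_trans ?_ h
      rw [show t + 2 = t + 1 + 1 from rfl, unitaryProd_succ y (t + 1), unitaryProd_succ y t, mul_assoc]
      refine le_mul_of_one_le_right (unitaryProd_pos h0 h1 _).le ?_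
      rw [ht.add_one.neg_pow, ht.add_one.add_one.neg_pow, pow_succ y (t + 1)]
      have hz : 0 < y ^ (t + 1) := by positivity
      have hz1 : y ^ (t + 1) ≤ 1 / 2 := by
        rw [pow_succ]
        have : y ^ t ≤ 1 := pow_le_one₀ h0.le (by linarith)
        nlinarith
      -- with `z = y ^ (t + 1)` the product is `1 + z (1 - y - z y)`
      have hb : 0 ≤ 1 - y - y ^ (t + 1) * y := by nlinarith
      nlinarith [mul_nonneg hz.le hb]

lemma unitaryProd_le_add {y : ℚ} (h0 : 0 < y) (h1 : y ≤ 1 / 2) (t s : ℕ) :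
    3 / 4 * unitaryProd y t ≤ unitaryProd y (t + s) := by
  have hp := unitaryProd_pos h0 h1 t
  rcases Nat.even_or_odd t with ht | ht
  · linarith [unitaryProd_le_add_of_even h0 h1 ht s]
  · cases s with
    | zero => rw [add_zero]; linarith
    | succ s =>
      have h := unitaryProd_le_add_of_even h0 h1 ht.add_one s
      rw [show t + (s + 1) = t + 1 + s by ring]
      refine le_trans ?_ h
      rw [unitaryProd_succ, ht.add_one.neg_pow, mul_comm]
      refine mul_le_mul_of_nonneg_left ?_ hp.le
      obtain ⟨m, rfl⟩ := ht
      have h2 : y ^ (2 * m + 1 + 1) ≤ y ^ 2 :=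
        pow_le_pow_of_le_one h0.le (by linarith) (by omega)
      nlinarith

/-- The factorization `|GU_n(x)| = x^{n²} ∏_{i=1}^n (1 - (-x⁻¹)^i)`. -/
lemma pow_mul_prod_eq {x : ℚ} (hx : 0 < x) (n : ℕ) :
    x ^ (n * (n - 1) / 2) * ∏ i ∈ Finset.Icc 1 n, (x ^ i - (-1) ^ i) =
      x ^ (n ^ 2) * unitaryProd x⁻¹ n := by
  induction n with
  | zero => simp [unitaryProd]
  | succ n ih =>
    have hexp : (n + 1) * (n + 1 - 1) / 2 = n * (n - 1) / 2 + n := by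
      rw [← Nat.choose_two_right, ← Nat.choose_two_right, Nat.choose_succ_succ' n 1,
        Nat.choose_one_right, add_comm]
    have hf : x ^ (n + 1) - (-1) ^ (n + 1) = x ^ (n + 1) * (1 - (-x⁻¹) ^ (n + 1)) := by
      have : (-x⁻¹) ^ (n + 1) = (-1) ^ (n + 1) * (x ^ (n + 1))⁻¹ := by
        rw [neg_pow, inv_pow]
      rw [this]
      field_simp
    rw [Finset.prod_Icc_succ_top (by omega), hexp, unitaryProd_succ, hf, pow_add]
    calc _ = (x ^ (n * (n - 1) / 2) * ∏ i ∈ Finset.Icc 1 n, (x ^ i - (-1) ^ i)) *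
          (x ^ n * (x ^ (n + 1) * (1 - (-x⁻¹) ^ (n + 1)))) := by ring
      _ = _ := by rw [ih]; ring

theorem gu_conj_class_size_estimate (q e k t n : ℕ) (hq : 2 ≤ q) (he : 2 ≤ e) (hk : 1 ≤ k)
    (hn : n = e * k + t) :
    ((q : ℚ) ^ (n * (n - 1) / 2) * ∏ i ∈ Finset.Icc 1 n, ((q : ℚ) ^ i - (-1) ^ i)) ^ 2 ≥
      (q : ℚ) ^ (2 * ((n : ℤ) * (n - 1) - e * k ^ 2 + k - t ^ 2) + ((n : ℤ) - k - t - 1)) *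
        ((q : ℚ) ^ (e * (k * (k - 1) / 2) + t * (t - 1) / 2) *
          (∏ i ∈ Finset.Icc 1 k, ((q : ℚ) ^ (e * i) - (-1) ^ i)) *
          ∏ i ∈ Finset.Icc 1 t, ((q : ℚ) ^ i - (-1) ^ i)) ^ 2 := by
  have hq2 : (2 : ℚ) ≤ q := by exact_mod_cast hq
  have hq0 : (0 : ℚ) < q := by linarith
  have hqe : (4 : ℚ) ≤ (q : ℚ) ^ e :=
    calc (4 : ℚ) = 2 ^ 2 := by norm_num
      _ ≤ (q : ℚ) ^ 2 := by gcongr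
      _ ≤ (q : ℚ) ^ e := pow_le_pow_right₀ (by linarith) he
  have hy0 : (0 : ℚ) < (q : ℚ)⁻¹ := by positivity
  have hy1 : (q : ℚ)⁻¹ ≤ 1 / 2 := by
    rw [one_div]; exact inv_anti₀ (by norm_num) hq2
  have hz0 : (0 : ℚ) < ((q : ℚ) ^ e)⁻¹ := by positivity
  have hz1 : ((q : ℚ) ^ e)⁻¹ ≤ 1 / 4 := by
    rw [one_div]; exact inv_anti₀ (by norm_num) hqe
  have hB := unitaryProd_le hz0 (by linarith) k
  have hBpos := unitaryProd_pos hz0 (by linarith) k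
  have hT := unitaryProd_pos hy0 hy1 t
  have hA : 3 / 4 * unitaryProd (q : ℚ)⁻¹ t ≤ unitaryProd (q : ℚ)⁻¹ n := by
    rw [hn, add_comm]; exact unitaryProd_le_add hy0 hy1 t (e * k)
  have hR : (q : ℚ) ^ (e * (k * (k - 1) / 2) + t * (t - 1) / 2) *
      (∏ i ∈ Finset.Icc 1 k, ((q : ℚ) ^ (e * i) - (-1) ^ i)) *
      ∏ i ∈ Finset.Icc 1 t, ((q : ℚ) ^ i - (-1) ^ i) =
      (q : ℚ) ^ (e * k ^ 2 + t ^ 2) *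
        (unitaryProd ((q : ℚ) ^ e)⁻¹ k * unitaryProd (q : ℚ)⁻¹ t) := by
    have h1 := pow_mul_prod_eq (x := (q : ℚ) ^ e) (by positivity) k
    have h2 := pow_mul_prod_eq hq0 t
    simp only [← pow_mul] at h1
    calc _ = ((q : ℚ) ^ (e * (k * (k - 1) / 2)) *
            ∏ i ∈ Finset.Icc 1 k, ((q : ℚ) ^ (e * i) - (-1) ^ i)) *
          ((q : ℚ) ^ (t * (t - 1) / 2) * ∏ i ∈ Finset.Icc 1 t, ((q : ℚ) ^ i - (-1) ^ i)) := by
          rw [pow_add]; ring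
      _ = _ := by rw [h1, h2, pow_add]; ring
  rw [ge_iff_le, hR, pow_mul_prod_eq hq0 n, mul_pow, mul_pow _ (unitaryProd _ n)]
  set Z : ℤ := 2 * ((n : ℤ) * (n - 1) - e * k ^ 2 + k - t ^ 2) + ((n : ℤ) - k - t - 1) with hZ
  -- The exponents of `q` on the two sides differ by `(e - 1) k + 2 t + 1 ≥ 2`, written below as `d + 2`.
  obtain ⟨d, hd⟩ : ∃ d : ℕ, (d : ℤ) = ((e : ℤ) - 1) * k + 2 * t - 1 := by
    refine ⟨(((e : ℤ) - 1) * k + 2 * t - 1).toNat, Int.toNat_of_nonneg ?_⟩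
    have : (1 : ℤ) ≤ ((e : ℤ) - 1) * k := by
      have h1 : (1 : ℤ) ≤ (e : ℤ) - 1 := by omega
      have h2 : (1 : ℤ) ≤ k := by omega
      nlinarith
    omega
  have hpow : ((q : ℚ) ^ (n ^ 2)) ^ 2 =
      (q : ℚ) ^ Z * ((q : ℚ) ^ (e * k ^ 2 + t ^ 2)) ^ 2 * (q : ℚ) ^ (d + 2) := by
    rw [← pow_mul, ← pow_mul, ← zpow_natCast, ← zpow_natCast (q : ℚ) ((e * k ^ 2 + t ^ 2) * 2),
      ← zpow_natCast (q : ℚ) (d + 2), ← zpow_add₀ hq0.ne', ← zpow_add₀ hq0.ne']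
    congr 1
    push_cast
    rw [hd, hZ, hn]
    push_cast
    ring
  have h4 : (2 : ℚ) ^ 2 ≤ (q : ℚ) ^ (d + 2) :=
    calc (2 : ℚ) ^ 2 ≤ (q : ℚ) ^ 2 := by gcongr
      _ ≤ (q : ℚ) ^ (d + 2) := pow_le_pow_right₀ (by linarith) (by omega)
  have hmain : unitaryProd ((q : ℚ) ^ e)⁻¹ k * unitaryProd (q : ℚ)⁻¹ t ≤
      2 * unitaryProd (q : ℚ)⁻¹ n := by
    nlinarith [mul_le_mul_of_nonneg_right hB hT.le]
  rw [hpow, ← mul_assoc, mul_assoc _ ((q : ℚ) ^ (d + 2))]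
  refine mul_le_mul_of_nonneg_left ?_ (by positivity)
  calc _ ≤ (2 * unitaryProd (q : ℚ)⁻¹ n) ^ 2 := pow_le_pow_left₀ (by positivity) hmain 2
    _ = 2 ^ 2 * unitaryProd (q : ℚ)⁻¹ n ^ 2 := mul_pow _ _ _
    _ ≤ _ := mul_le_mul_of_nonneg_right h4 (sq_nonneg _)
end

section
/- Let q be a power of 2, F a finite field with q elements and K a field extension of F of degree 6. Then the group H = Kˣ ⋊ Gal(K/F) (semidirect product for the natural Galois action on units) has exactly q³ + 1 Sylow 2-subgroups. -/
theorem mem_normalizer_zpowers_of_orderOf_eq_two {G : Type*} [Group G] {s : G}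
    (hs : orderOf s = 2) (g : G) :
    g ∈ Subgroup.normalizer (Subgroup.zpowers s : Set G) ↔ Commute g s := by
  have hs1 : s ≠ 1 := by
    rintro rfl
    simp at hs
  have hmem : ∀ h : G, h ∈ Subgroup.zpowers s ↔ h = 1 ∨ h = s := by
    intro h
    have hfin : IsOfFinOrder s := orderOf_pos_iff.mp (by omega)
    classical
    rw [← hfin.mem_powers_iff_mem_zpowers, hfin.mem_powers_iff_mem_range_orderOf, hs]
    simp [Finset.range_add_one, eq_comm, or_comm]
  rw [Subgroup.mem_normalizer_iff]
  constructor
  · intro h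
    have h1 := (h s).mp (Subgroup.mem_zpowers s)
    rcases (hmem _).mp h1 with h2 | h2
    · exact absurd (conj_eq_one_iff.mp h2) hs1
    · exact mul_inv_eq_iff_eq_mul.mp h2
  · intro hc h
    have hconj : g * s * g⁻¹ = s := mul_inv_eq_iff_eq_mul.mpr hc
    rw [hmem, hmem, conj_eq_one_iff]
    refine or_congr_right ⟨fun e => e ▸ hconj, fun e => ?_⟩
    exact (MulAut.conj g).injective (by simpa [hconj] using e)

theorem commute_inr_iff {F K : Type*} [Field F] [Field K] [Algebra F K] {τ : K ≃ₐ[F] K} {n : ℕ}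
    (hn : 0 < n) (hτ : ∀ x, τ x = x ^ n) (g : Kˣ ⋊[galUnitsHom F K] (K ≃ₐ[F] K)) :
    Commute g (SemidirectProduct.inr τ) ↔ g.left ^ (n - 1) = 1 := by
  have hcomm : g.right * τ = τ * g.right := by
    ext x
    simp [hτ]
  have hact : galUnitsHom F K τ g.left = g.left ^ n := by
    ext
    exact (hτ _).trans (Units.val_pow_eq_pow_val _ _).symm
  obtain ⟨m, rfl⟩ : ∃ m, n = m + 1 := ⟨n - 1, by omega⟩
  rw [Commute, SemiconjBy, SemidirectProduct.ext_iff]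
  simp [hact, hcomm, pow_succ]

/-- Let `q` be a power of `2`, `F` a finite field with `q` elements and `K`
an extension of `F` of degree `6`.  Then the group `H = Kˣ ⋊ Gal(K/F)` has exactly `q³ + 1`
Sylow `2`-subgroups. -/
theorem sylow_two_count_of_singer_normalizer (q : ℕ) (hq : ∃ m : ℕ, 0 < m ∧ q = 2 ^ m)
    (F K : Type*) [Field F] [Fintype F] (hF : Fintype.card F = q)
    [Field K] [Algebra F K] [FiniteDimensional F K] (hK : Module.finrank F K = 6) :
    Nat.card (Sylow 2 (Kˣ ⋊[galUnitsHom F K] (K ≃ₐ[F] K))) = q ^ 3 + 1 := by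
  obtain ⟨m, hm, rfl⟩ := hq
  generalize hQ : (2 : ℕ) ^ m = q at *
  have hq2 : 2 ∣ q := hQ ▸ dvd_pow_self 2 hm.ne'
  have hqpos : 0 < q := hF ▸ Fintype.card_pos
  have : Finite K := Module.finite_of_finite F
  have hcardK : Nat.card K = q ^ 6 := by
    rw [Module.natCard_eq_pow_finrank (K := F), hK, Nat.card_eq_fintype_card, hF]
  have hcardU : Nat.card Kˣ = (q ^ 3 - 1) * (q ^ 3 + 1) := by
    rw [Nat.card_units, hcardK, mul_comm, ← Nat.sq_sub_sq, ← pow_mul]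
  have hcardG : Nat.card (K ≃ₐ[F] K) = 6 := by
    rw [IsGalois.card_aut_eq_finrank, hK]
  have hcardH : Nat.card (Kˣ ⋊[galUnitsHom F K] (K ≃ₐ[F] K)) =
      (q ^ 3 - 1) * (q ^ 3 + 1) * 6 := by
    rw [SemidirectProduct.card, hcardU, hcardG]
  have hfin : Finite (Kˣ ⋊[galUnitsHom F K] (K ≃ₐ[F] K)) :=
    Finite.of_equiv _ SemidirectProduct.equivProd.symm
  set τ : K ≃ₐ[F] K := FiniteField.frobeniusAlgEquivOfAlgebraic F K ^ 3 with hτdef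
  have hτ : ∀ x, τ x = x ^ q ^ 3 := by
    intro x
    rw [hτdef, AlgEquiv.coe_pow, FiniteField.coe_frobeniusAlgEquivOfAlgebraic_iterate, hF]
  have hτord : orderOf τ = 2 := by
    rw [hτdef, orderOf_pow, FiniteField.orderOf_frobeniusAlgEquivOfAlgebraic, hK]
    norm_num
  set s : Kˣ ⋊[galUnitsHom F K] (K ≃ₐ[F] K) := SemidirectProduct.inr τ with hsdef
  have hs : orderOf s = 2 := by
    rw [hsdef, orderOf_injective _ SemidirectProduct.inr_injective, hτord]
  have hq3 : 2 ∣ q ^ 3 := dvd_pow hq2 (by norm_num)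
  have hq3pos : 0 < q ^ 3 := by positivity
  have hq3ge : 2 ≤ q ^ 3 := Nat.le_of_dvd hq3pos hq3
  have hfact : (Nat.card (Kˣ ⋊[galUnitsHom F K] (K ≃ₐ[F] K))).factorization 2 = 1 := by
    rw [hcardH]
    have hodd : ¬ 2 ∣ (q ^ 3 - 1) * (q ^ 3 + 1) * 3 := by
      rw [Nat.prime_two.dvd_mul, Nat.prime_two.dvd_mul]
      omega
    rw [show (q ^ 3 - 1) * (q ^ 3 + 1) * 6 = 2 * ((q ^ 3 - 1) * (q ^ 3 + 1) * 3) by ring,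
      Nat.factorization_mul two_ne_zero (fun h => by simp [h] at hodd), Finsupp.add_apply,
      Nat.prime_two.factorization_self, Nat.factorization_eq_zero_of_not_dvd hodd]
  let P : Sylow 2 (Kˣ ⋊[galUnitsHom F K] (K ≃ₐ[F] K)) :=
    Sylow.ofCard (Subgroup.zpowers s) (by rw [Nat.card_zpowers, hs, hfact, pow_one])
  have hN : Nat.card (Subgroup.normalizer (P : Set (Kˣ ⋊[galUnitsHom F K] (K ≃ₐ[F] K)))) =
      (q ^ 3 - 1) * 6 := by
    have e : Subgroup.normalizer (P : Set (Kˣ ⋊[galUnitsHom F K] (K ≃ₐ[F] K))) ≃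
        (powMonoidHom (q ^ 3 - 1) : Kˣ →* Kˣ).ker × (K ≃ₐ[F] K) :=
      (SemidirectProduct.equivProd.subtypeEquiv (q :=
          fun p => p.1 ∈ (powMonoidHom (q ^ 3 - 1) : Kˣ →* Kˣ).ker) fun g =>
        (mem_normalizer_zpowers_of_orderOf_eq_two hs g).trans (commute_inr_iff hq3pos hτ g)).trans
      { toFun := fun p => (⟨p.1.1, p.2⟩, p.1.2)
        invFun := fun p => ⟨(p.1.1, p.2), p.1.2⟩ }
    rw [Nat.card_congr e, Nat.card_prod, hcardG, IsCyclic.card_powMonoidHom_ker, hcardU,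
      Nat.gcd_eq_right (dvd_mul_right _ _)]
  rw [Sylow.card_eq_index_normalizer P]
  have hmul := Subgroup.card_mul_index
    (Subgroup.normalizer (P : Set (Kˣ ⋊[galUnitsHom F K] (K ≃ₐ[F] K))))
  rw [hN, hcardH] at hmul
  refine Nat.eq_of_mul_eq_mul_left (show 0 < (q ^ 3 - 1) * 6 by omega) (hmul.trans ?_)
  ring
end

section
/- Let q be a prime power, F a finite field with q elements and K a field extension of F of degree 6. Then the group H = Kˣ ⋊ Gal(K/F) contains at most 2(q⁴ + q² + 2) elements of order 3. -/
section

variable {F K : Type*} [Field F] [Fintype F] [Field K] [Algebra F K] [FiniteDimensional F K]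

theorem frobenius_pow_apply (n : ℕ) (x : K) :
    (FiniteField.frobeniusAlgEquivOfAlgebraic F K ^ n) x = x ^ Fintype.card F ^ n := by
  induction n with
  | zero => simp
  | succ n ih => rw [pow_succ', AlgEquiv.mul_apply, ih,
      FiniteField.coe_frobeniusAlgEquivOfAlgebraic, pow_succ, pow_mul]

theorem eq_one_or_frobenius_pow_of_cube_eq_one (hK : Module.finrank F K = 6)
    (σ : K ≃ₐ[F] K) (h : σ ^ 3 = 1) :
    σ = 1 ∨ σ = FiniteField.frobeniusAlgEquivOfAlgebraic F K ^ 2 ∨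
      σ = FiniteField.frobeniusAlgEquivOfAlgebraic F K ^ 4 := by
  have : Finite K := Module.finite_of_finite F
  obtain ⟨⟨n, hn⟩, rfl⟩ :=
    (FiniteField.bijective_frobeniusAlgEquivOfAlgebraic_pow F K).surjective σ
  have ho := FiniteField.orderOf_frobeniusAlgEquivOfAlgebraic F K
  simp only at h ⊢
  rw [← pow_mul, ← orderOf_dvd_iff_pow_eq_one, ho, hK] at h
  rw [hK] at hn
  have : n = 0 ∨ n = 2 ∨ n = 4 := by omega
  rcases this with rfl | rfl | rfl <;> simp

theorem ncard_units_pow_eq_one_le {R : Type*} [Field R] (k : ℕ) (hk : k ≠ 0) :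
    {u : Rˣ | u ^ k = 1}.Finite ∧ {u : Rˣ | u ^ k = 1}.ncard ≤ k := by
  have : NeZero k := ⟨hk⟩
  have e : {u : Rˣ | u ^ k = 1} = (rootsOfUnity k R : Set Rˣ) := by
    ext u; simp [mem_rootsOfUnity]
  rw [e]
  refine ⟨Set.finite_coe_iff.mp (inferInstanceAs (Finite (rootsOfUnity k R))), ?_⟩
  rw [← Nat.card_coe_set_eq]
  simpa using card_rootsOfUnity R k

/-- This is the first component of `h ^ 3 = 1`, read in `K`. -/
theorem orbit_product_eq_one (h : Kˣ ⋊[galUnitsHom F K] (K ≃ₐ[F] K)) (hh : h ^ 3 = 1) :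
    (h.left : K) * h.right (h.left : K) * h.right (h.right (h.left : K)) = 1 := by
  rw [pow_three'] at hh
  exact congrArg (fun g => ((g.left : Kˣ) : K)) hh

/-- The two elements of order `3` of the Galois group define the same condition on
`u = h.left`: its
norm to the fixed field of `φ ^ 2` is `1`, where `φ` is the Frobenius over `F`. -/
theorem left_pow_eq_one (hK : Module.finrank F K = 6)
    (h : Kˣ ⋊[galUnitsHom F K] (K ≃ₐ[F] K)) (hh : h ^ 3 = 1)
    (hr : h.right = FiniteField.frobeniusAlgEquivOfAlgebraic F K ^ 2 ∨
      h.right = FiniteField.frobeniusAlgEquivOfAlgebraic F K ^ 4) :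
    h.left ^ (Fintype.card F ^ 4 + Fintype.card F ^ 2 + 1) = 1 := by
  have key := orbit_product_eq_one h hh
  have : Finite K := Module.finite_of_finite F
  have h6 : (FiniteField.frobeniusAlgEquivOfAlgebraic F K) ^ 6 = 1 := by
    rw [← hK, ← FiniteField.orderOf_frobeniusAlgEquivOfAlgebraic F K, pow_orderOf_eq_one]
  ext
  push_cast
  rw [pow_add, pow_add, pow_one, ← key]
  rcases hr with hr | hr
  · rw [hr, frobenius_pow_apply, frobenius_pow_apply]
    ring
  -- The square of `φ ^ 4` is `φ ^ 8 = φ ^ 2`, so the same three conjugates of `u` are multiplied.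
  · have h8 : (FiniteField.frobeniusAlgEquivOfAlgebraic F K) ^ 4 *
        FiniteField.frobeniusAlgEquivOfAlgebraic F K ^ 4 =
        FiniteField.frobeniusAlgEquivOfAlgebraic F K ^ 2 := by
      rw [← pow_add, show 4 + 4 = 6 + 2 from rfl, pow_add, h6, one_mul]
    rw [hr, ← AlgEquiv.mul_apply, h8, frobenius_pow_apply, frobenius_pow_apply]
    ring

end

/-- Let `F` be a finite field with `q` elements and `K` an extension of `F`
of degree `6`.  Then the group `H = Kˣ ⋊ Gal(K/F)` contains at most `2(q⁴ + q² + 2)` elements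
of order `3`. -/
theorem order_three_count_of_singer_normalizer (q : ℕ) (hq : IsPrimePow q)
    (F K : Type*) [Field F] [Fintype F] (hF : Fintype.card F = q)
    [Field K] [Algebra F K] [FiniteDimensional F K] (hK : Module.finrank F K = 6) :
    {h : Kˣ ⋊[galUnitsHom F K] (K ≃ₐ[F] K) | orderOf h = 3}.ncard
      ≤ 2 * (q ^ 4 + q ^ 2 + 2) := by
  let φ := FiniteField.frobeniusAlgEquivOfAlgebraic F K
  let A : Set Kˣ := {u | u ^ (q ^ 4 + q ^ 2 + 1) = 1}
  let B : Set Kˣ := {u | u ^ 3 = 1}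
  obtain ⟨fA, cA⟩ : A.Finite ∧ A.ncard ≤ q ^ 4 + q ^ 2 + 1 :=
    ncard_units_pow_eq_one_le (R := K) (q ^ 4 + q ^ 2 + 1) (by omega)
  obtain ⟨fB, cB⟩ : B.Finite ∧ B.ncard ≤ 3 :=
    ncard_units_pow_eq_one_le (R := K) 3 (by omega)
  let f (σ : K ≃ₐ[F] K) (u : Kˣ) : Kˣ ⋊[galUnitsHom F K] (K ≃ₐ[F] K) := ⟨u, σ⟩
  have hsub : {h : Kˣ ⋊[galUnitsHom F K] (K ≃ₐ[F] K) | orderOf h = 3} ⊆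
      f 1 '' (B \ {1}) ∪ (f (φ ^ 2) '' A ∪ f (φ ^ 4) '' A) := by
    intro h ho
    have h3 : h ^ 3 = 1 := by rw [← show orderOf h = 3 from ho, pow_orderOf_eq_one]
    have hr3 : h.right ^ 3 = 1 := by
      rw [← SemidirectProduct.rightHom_eq_right, ← map_pow, h3, map_one]
    have hleft := left_pow_eq_one hK h h3
    rw [hF] at hleft
    rcases eq_one_or_frobenius_pow_of_cube_eq_one hK h.right hr3 with hr | hr | hr
    · refine Or.inl ⟨h.left, ⟨?_, ?_⟩, SemidirectProduct.ext rfl hr.symm⟩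
      · have key := orbit_product_eq_one h h3
        simp only [hr, AlgEquiv.one_apply] at key
        ext
        push_cast
        rw [← key]
        ring
      · intro hl
        have : h = 1 := SemidirectProduct.ext hl hr
        simp [this] at ho
    · exact Or.inr (Or.inl ⟨h.left, hleft (Or.inl hr), SemidirectProduct.ext rfl hr.symm⟩)
    · exact Or.inr (Or.inr ⟨h.left, hleft (Or.inr hr), SemidirectProduct.ext rfl hr.symm⟩)
  have fB1 : (B \ {1}).Finite := fB.subset Set.sdiff_subset
  have cB1 : (B \ {1}).ncard ≤ 2 := by
    rw [Set.ncard_sdiff_singleton_of_mem (show (1 : Kˣ) ∈ B from one_pow 3)]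
    omega
  have b1 := Set.ncard_le_ncard hsub
    ((fB1.image _).union ((fA.image _).union (fA.image _)))
  have b2 := Set.ncard_union_le (f 1 '' (B \ {1})) (f (φ ^ 2) '' A ∪ f (φ ^ 4) '' A)
  have b3 := Set.ncard_union_le (f (φ ^ 2) '' A) (f (φ ^ 4) '' A)
  have c1 := Set.ncard_image_le (f := f 1) fB1
  have c2 := Set.ncard_image_le (f := f (φ ^ 2)) fA
  have c3 := Set.ncard_image_le (f := f (φ ^ 4)) fA
  omega
end

section
/- Let q be a prime power, F a finite field with q elements and K a field extension of F of degree 6, and let H = Kˣ ⋊ Gal(K/F). Then the elements of order 2 in H that do not lie in the subgroup Kˣ × {1} are exactly the elements (λ, φ³), where φ is the q-power Frobenius generating Gal(K/F) and λ ∈ Kˣ satisfies λ^{q³+1} = 1; consequently there are exactly q³ + 1 such elements. -/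
open FiniteField in
/-- The cube of the Frobenius is the unique involution of the Galois group, which is cyclic of
order `6`. -/
lemma sq_eq_one_and_ne_one_iff_eq_frobenius_cube (F K : Type*) [Field F] [Fintype F] [Field K]
    [Algebra F K] [FiniteDimensional F K] (hK : Module.finrank F K = 6) (σ : K ≃ₐ[F] K) :
    (σ ^ 2 = 1 ∧ σ ≠ 1) ↔ σ = frobeniusAlgEquivOfAlgebraic F K ^ 3 := by
  have : Finite K := Module.finite_of_finite F
  have ho : orderOf (frobeniusAlgEquivOfAlgebraic F K) = 6 := by
    rw [orderOf_frobeniusAlgEquivOfAlgebraic, hK]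
  constructor
  · rintro ⟨h2, h1⟩
    obtain ⟨⟨n, hn⟩, rfl⟩ := (bijective_frobeniusAlgEquivOfAlgebraic_pow F K).2 σ
    dsimp only at *
    rw [← pow_mul, ← orderOf_dvd_iff_pow_eq_one, ho] at h2
    rw [Ne, ← orderOf_dvd_iff_pow_eq_one, ho] at h1
    obtain rfl : n = 3 := by omega
    rfl
  · rintro rfl
    rw [← pow_mul, Ne, ← orderOf_dvd_iff_pow_eq_one, ← orderOf_dvd_iff_pow_eq_one, ho]
    decide

lemma frobenius_cube_apply (F K : Type*) [Field F] [Fintype F] [Field K]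
    [Algebra F K] [FiniteDimensional F K] (v : K) :
    (FiniteField.frobeniusAlgEquivOfAlgebraic F K ^ 3) v = v ^ Fintype.card F ^ 3 := by
  rw [AlgEquiv.coe_pow, FiniteField.coe_frobeniusAlgEquivOfAlgebraic_iterate]

lemma ncard_units_pow_eq_one (F K : Type*) [Field F] [Fintype F] [Field K]
    [Algebra F K] [FiniteDimensional F K] (hK : Module.finrank F K = 6) :
    {u : Kˣ | u ^ (Fintype.card F ^ 3 + 1) = 1}.ncard = Fintype.card F ^ 3 + 1 := by
  have : Finite K := Module.finite_of_finite F
  have hc : Nat.card Kˣ = (Fintype.card F ^ 3 + 1) * (Fintype.card F ^ 3 - 1) := by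
    rw [Nat.card_units, Module.natCard_eq_pow_finrank (K := F), hK, Nat.card_eq_fintype_card,
      ← Nat.sq_sub_sq, ← pow_mul, one_pow]
  have hk := IsCyclic.card_powMonoidHom_ker (G := Kˣ) (Fintype.card F ^ 3 + 1)
  rw [hc, Nat.gcd_mul_right_left] at hk
  exact hk

/-- Let `F` be a finite field with `q` elements, `K` an extension of degree
`6`, and `H = Kˣ ⋊ Gal(K/F)`.  The elements of order `2` of `H` not lying in `Kˣ × {1}` are
exactly the pairs `(λ, φ³)` (where `φ : v ↦ v^q` is the Frobenius, so `φ³ : v ↦ v^{q³}`) with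
`λ^{q³+1} = 1`; consequently there are exactly `q³ + 1` of them. -/
theorem involutions_of_singer_normalizer (q : ℕ) (hq : IsPrimePow q)
    (F K : Type*) [Field F] [Fintype F] (hF : Fintype.card F = q)
    [Field K] [Algebra F K] [FiniteDimensional F K] (hK : Module.finrank F K = 6) :
    (∀ h : Kˣ ⋊[galUnitsHom F K] (K ≃ₐ[F] K),
      (orderOf h = 2 ∧ h.right ≠ 1) ↔
        ((∀ v : K, h.right v = v ^ q ^ 3) ∧ h.left ^ (q ^ 3 + 1) = 1)) ∧
    {h : Kˣ ⋊[galUnitsHom F K] (K ≃ₐ[F] K) | orderOf h = 2 ∧ h.right ≠ 1}.ncard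
      = q ^ 3 + 1 := by
  subst hF
  have key : ∀ h : Kˣ ⋊[galUnitsHom F K] (K ≃ₐ[F] K),
      (orderOf h = 2 ∧ h.right ≠ 1) ↔
        (h.right = FiniteField.frobeniusAlgEquivOfAlgebraic F K ^ 3 ∧
          h.left ^ (Fintype.card F ^ 3 + 1) = 1) := by
    rintro ⟨u, σ⟩
    have hord : (orderOf (⟨u, σ⟩ : Kˣ ⋊[galUnitsHom F K] (K ≃ₐ[F] K)) = 2 ∧ σ ≠ 1) ↔
        ((σ ^ 2 = 1 ∧ σ ≠ 1) ∧ u * galUnitsHom F K σ u = 1) := by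
      rw [orderOf_eq_iff two_pos]
      constructor
      · rintro ⟨⟨h2, -⟩, h1⟩
        rw [pow_two, SemidirectProduct.ext_iff] at h2
        exact ⟨⟨by rw [pow_two]; exact h2.2, h1⟩, h2.1⟩
      · rintro ⟨⟨h2, h1⟩, hu⟩
        refine ⟨⟨?_, fun m hm hm0 h => ?_⟩, h1⟩
        · rw [pow_two]
          exact SemidirectProduct.ext hu (by rw [pow_two] at h2; exact h2)
        · obtain rfl : m = 1 := by omega
          rw [pow_one] at h
          exact h1 (congrArg SemidirectProduct.right h)
    change (_ ∧ σ ≠ 1) ↔ (σ = _ ∧ u ^ _ = 1)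
    rw [hord, sq_eq_one_and_ne_one_iff_eq_frobenius_cube F K hK]
    refine and_congr_right fun hσ => ?_
    have : galUnitsHom F K σ u = u ^ Fintype.card F ^ 3 := by
      ext
      rw [Units.val_pow_eq_pow_val, hσ]
      exact frobenius_cube_apply F K u
    rw [this, pow_succ' u]
  refine ⟨fun h => ?_, ?_⟩
  · rw [key, AlgEquiv.ext_iff]
    simp only [frobenius_cube_apply]
  · simp only [key]
    trans {u : Kˣ | u ^ (Fintype.card F ^ 3 + 1) = 1}.ncard
    swap
    · exact ncard_units_pow_eq_one F K hK
    refine Set.ncard_congr (fun h _ => h.left) (fun h hh => hh.2) ?_ ?_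
    · intro a b ha hb hab
      exact SemidirectProduct.ext hab (ha.1.trans hb.1.symm)
    · intro u hu
      exact ⟨⟨u, _⟩, ⟨rfl, hu⟩, rfl⟩
end
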